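/- Eight shortcuts improve on seven: there exists a set S of eight shortcuts with diam(S) ≤ π − 0.5822 < π/2 + 1. Hence diam(8) < diam(7) = π/2 + 1. -/

import Mathlib

open Real MeasureTheory

/-- Arc distance between points on the unit circle, given by their polar angles:
the length of the shorter arc between them. -/
noncomputable def arcDist (p q : ℝ) : ℝ := ⨅ n : ℤ, |p - q + 2 * π * n|

/-- Euclidean length of the chord between the circle points with angles `u` and `v`. -/
noncomputable def chordLen (u v : ℝ) : ℝ := 2 * Real.sin (arcDist u v / 2)

/-- A pair of angles is a genuine shortcut (chord) if its endpoints are distinct points. -/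
def IsShortcut (s : ℝ × ℝ) : Prop := arcDist s.1 s.2 ≠ 0

/-- δ(a) = arcsin(a/2) - a/2. -/
noncomputable def sdelta (a : ℝ) : ℝ := Real.arcsin (a / 2) - a / 2

/-- Cost of a path that starts at `p`, fully traverses the listed chords in order
(travelling along the circle in between), and ends at `q`. -/
noncomputable def walkCost (q : ℝ) : ℝ → List (ℝ × ℝ) → ℝ
  | p, [] => arcDist p q
  | p, e :: L => arcDist p e.1 + chordLen e.1 e.2 + walkCost q e.2 L

/-- Shortest-path distance from `p` to `q` using the shortcuts of `S`
(each usable in either orientation, and always traversed completely). -/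
noncomputable def dS (S : Finset (ℝ × ℝ)) (p q : ℝ) : ℝ :=
  sInf {c | ∃ L : List (ℝ × ℝ), (∀ e ∈ L, e ∈ S ∨ (e.2, e.1) ∈ S) ∧ c = walkCost q p L}

/-- Diameter of the circle augmented with the shortcuts of `S`. -/
noncomputable def diamS (S : Finset (ℝ × ℝ)) : ℝ :=
  sSup {d | ∃ p q : ℝ, d = dS S p q}

/-- diam(k): the optimal diameter achievable with `k` shortcuts. -/
noncomputable def diamK (k : ℕ) : ℝ :=
  sInf {d | ∃ S : Finset (ℝ × ℝ), S.card = k ∧ (∀ s ∈ S, IsShortcut s) ∧ d = diamS S}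

/-- Distance from `p` to `q` when a single shortcut with endpoints `u`, `v` is available. -/
noncomputable def dOne (u v p q : ℝ) : ℝ :=
  min (arcDist p q)
    (min (arcDist p u + chordLen u v + arcDist v q)
      (arcDist p v + chordLen u v + arcDist u q))

/-- Two angles represent the same point of the circle. -/
def SamePoint (p q : ℝ) : Prop := arcDist p q = 0

/-- Two pairs of angles represent the same chord of the circle. -/
def SameChord (s t : ℝ × ℝ) : Prop :=
  (SamePoint s.1 t.1 ∧ SamePoint s.2 t.2) ∨ (SamePoint s.1 t.2 ∧ SamePoint s.2 t.1)

/-- `p` lies in the deep umbra of the shortcut from `u` to `u + β`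
(where `0 < β ≤ π` is the counterclockwise arc spanned by the shortcut):
`p` lies in the inner umbra, and `|p u'| + |s| ≥ d(p, v')` where `u'` is the
endpoint closer to `p` and `v'` the other one. -/
def InDeepUmbra (u β p : ℝ) : Prop :=
  (∃ t : ℝ, sdelta (chordLen u (u + β)) ≤ t ∧ t ≤ β - sdelta (chordLen u (u + β)) ∧
    arcDist p (u + t) = 0) ∧
  (arcDist p u ≤ arcDist p (u + β) →
    arcDist p (u + β) ≤ chordLen p u + chordLen u (u + β)) ∧
  (arcDist p (u + β) ≤ arcDist p u →
    arcDist p u ≤ chordLen p (u + β) + chordLen u (u + β))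

/-- `d` equals δ*_k : for `k ∈ {3,4,5}` this is `δ(a*_k)` where `a*_k + δ(a*_k) = (k-1)π/k`,
and for `k = 6` it is `δ(2) = π/2 - 1`. -/
def dstarSpec (k : ℕ) (d : ℝ) : Prop :=
  (k = 6 ∧ d = sdelta 2) ∨
    (∃ a, a ∈ Set.Icc (0 : ℝ) 2 ∧ a + sdelta a = ((k : ℝ) - 1) * π / k ∧ d = sdelta a)

/-!
Lower bound. Suppose that seven chords put all distances below `τ = π / 2 + 1`. A walk shorter than
`τ` contains at most one chord of length at least `1.4`, and the remaining chords save only a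
little compared with the arcs they span. A chord used for connecting the endpoints of an arc of
length `ξ` has its endpoints close to those of the arc, so for fixed `ξ` the midpoints of the arcs
it serves form at most two short arcs, one around its own midpoint and one, for the opposite
orientation, around the antipode. All these arcs together have to cover the circle. Comparing their
total length with `2π` for values of `ξ` between `τ` and `π` leaves exactly six long chords, all of
them close to diameters, and a short one, `c`. For `ξ = τ` the long chords serve only their first
orientation, and `c` can help only with arcs whose midpoint lies within `τ / 2` of `mid c`, or which
nearly start or end at `mid c`. The arcs that start or end exactly there are served by two long
chords alone, and then the lengths add up to less than `2π`.

Upper bound. Seven evenly spaced diameters attain `τ`. With eight chords, six near-diameters in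
their first orientation serve the arcs of every relevant length with midpoint in slightly more than
half of the circle; in the rest of the circle their second orientation serves the longest arcs only,
and two short chords suffice for the others.
-/

/-- The diameter attained by seven shortcuts. -/
local notation "τ" => (π / 2 + 1)

/-! ### Arc distance -/

lemma coe_add_two_pi_mul (x : ℝ) (n : ℤ) :
    ((x + 2 * π * n : ℝ) : AddCircle (2 * π)) = x := by
  rw [AddCircle.coe_add, add_eq_left, AddCircle.coe_eq_zero_iff]
  exact ⟨n, by rw [zsmul_eq_mul, mul_comm]⟩

lemma arcDist_eq_dist (p q : ℝ) : arcDist p q = dist (p : AddCircle (2 * π)) q := by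
  rw [dist_eq_norm, ← AddCircle.coe_sub]
  refine le_antisymm ?_ (le_ciInf fun n => ?_)
  · refine (ciInf_le ⟨0, ?_⟩ (-round ((2 * π)⁻¹ * (p - q)))).trans_eq ?_
    · rintro _ ⟨n, rfl⟩
      exact abs_nonneg _
    · rw [AddCircle.norm_eq]
      push_cast
      ring_nf
  · rw [← coe_add_two_pi_mul]
    exact QuotientAddGroup.norm_mk_le_norm

lemma exists_arcDist_eq_abs (p q : ℝ) : ∃ n : ℤ, arcDist p q = |p - q + 2 * π * n| := by
  refine ⟨-round ((2 * π)⁻¹ * (p - q)), ?_⟩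
  rw [arcDist_eq_dist, dist_eq_norm, ← AddCircle.coe_sub, AddCircle.norm_eq]
  push_cast
  ring_nf

lemma arcDist_le_abs_add (p q : ℝ) (n : ℤ) : arcDist p q ≤ |p - q + 2 * π * n| :=
  ciInf_le ⟨0, by rintro _ ⟨n, rfl⟩; exact abs_nonneg _⟩ n

lemma arcDist_le_abs (p q : ℝ) : arcDist p q ≤ |p - q| := by
  simpa using arcDist_le_abs_add p q 0

lemma arcDist_nonneg (p q : ℝ) : 0 ≤ arcDist p q := by
  rw [arcDist_eq_dist]
  exact dist_nonneg

lemma arcDist_comm (p q : ℝ) : arcDist p q = arcDist q p := by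
  rw [arcDist_eq_dist, arcDist_eq_dist, dist_comm]

lemma arcDist_triangle (p q r : ℝ) : arcDist p r ≤ arcDist p q + arcDist q r := by
  simp only [arcDist_eq_dist]
  exact dist_triangle _ _ _

lemma arcDist_le_pi (p q : ℝ) : arcDist p q ≤ π := by
  rw [arcDist_eq_dist, dist_eq_norm]
  refine (AddCircle.norm_le_half_period _ two_pi_pos.ne').trans_eq ?_
  rw [abs_of_pos two_pi_pos]
  ring

lemma arcDist_congr {p p' q q' : ℝ} (hp : (p : AddCircle (2 * π)) = p')
    (hq : (q : AddCircle (2 * π)) = q') : arcDist p q = arcDist p' q' := by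
  simp only [arcDist_eq_dist, hp, hq]

lemma le_arcDist {p q a : ℝ} (h₁ : a ≤ p - q) (h₂ : p - q ≤ 2 * π - a) : a ≤ arcDist p q := by
  refine le_ciInf fun n => ?_
  rcases lt_or_ge n 0 with hn | hn
  · have : (n : ℝ) ≤ -1 := by exact_mod_cast Int.le_sub_one_of_lt hn
    rw [le_abs]
    right
    nlinarith [pi_pos]
  · have : (0 : ℝ) ≤ n := by exact_mod_cast hn
    exact le_abs.2 (Or.inl (by nlinarith [pi_pos]))

lemma arcDist_sub_left (p x q : ℝ) : arcDist (p - x) q = arcDist p (q + x) := by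
  simp only [arcDist, sub_sub, add_comm x]

lemma arcDist_add_left (p x q : ℝ) : arcDist (p + x) q = arcDist p (q - x) := by
  simp only [arcDist, add_sub_right_comm, sub_sub_eq_add_sub]

lemma le_arcDist_sub_add {ξ : ℝ} (m : ℝ) (hξ : ξ ≤ π) :
    ξ ≤ arcDist (m - ξ / 2) (m + ξ / 2) := by
  rw [arcDist_comm]
  exact le_arcDist (by linarith) (by linarith)

/-! ### Chords -/

/-- The length `|e|` of the chord `e`. -/
noncomputable def chordLength (e : ℝ × ℝ) : ℝ := chordLen e.1 e.2

/-- Half the length of the shorter arc spanned by the chord `e`. -/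
noncomputable def halfSpan (e : ℝ × ℝ) : ℝ := arcDist e.1 e.2 / 2

/-- How much half the arc spanned by `e` falls short of a quarter circle; it vanishes exactly for
diameters. -/
noncomputable def defect (e : ℝ × ℝ) : ℝ := π / 2 - halfSpan e

/-- The length saved by following the chord `e` instead of the arc it spans; this is `2 δ(|e|)` in
terms of the function `δ = sdelta`. -/
noncomputable def saving (e : ℝ × ℝ) : ℝ := arcDist e.1 e.2 - chordLength e

/-- The least total arc length needed to connect `p` to one endpoint of the chord `e` and `q` to
the other one. -/
noncomputable def access (e : ℝ × ℝ) (p q : ℝ) : ℝ :=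
  min (arcDist p e.1 + arcDist q e.2) (arcDist p e.2 + arcDist q e.1)

/-- The chord centred at angle `μ` with endpoints at angular distance `φ` on either side. -/
def chordAt (μ φ : ℝ) : ℝ × ℝ := (μ - φ, μ + φ)

lemma halfSpan_nonneg (e : ℝ × ℝ) : 0 ≤ halfSpan e := div_nonneg (arcDist_nonneg _ _) zero_le_two

lemma halfSpan_le (e : ℝ × ℝ) : halfSpan e ≤ π / 2 := by
  unfold halfSpan
  linarith [arcDist_le_pi e.1 e.2]

lemma defect_nonneg (e : ℝ × ℝ) : 0 ≤ defect e := sub_nonneg.2 (halfSpan_le e)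

lemma defect_le (e : ℝ × ℝ) : defect e ≤ π / 2 := sub_le_self _ (halfSpan_nonneg e)

lemma chordLength_eq_two_mul_sin (e : ℝ × ℝ) : chordLength e = 2 * sin (halfSpan e) := rfl

lemma chordLength_eq_two_mul_cos (e : ℝ × ℝ) : chordLength e = 2 * cos (defect e) := by
  rw [chordLength_eq_two_mul_sin, defect, cos_pi_div_two_sub]

lemma saving_eq_two_mul_halfSpan_sub (e : ℝ × ℝ) : saving e = 2 * halfSpan e - chordLength e := by
  rw [saving, halfSpan]
  ring

lemma saving_eq_pi_sub (e : ℝ × ℝ) : saving e = π - 2 * defect e - chordLength e := by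
  rw [saving_eq_two_mul_halfSpan_sub, defect]
  ring

lemma chordLength_nonneg (e : ℝ × ℝ) : 0 ≤ chordLength e := by
  have := sin_nonneg_of_nonneg_of_le_pi (halfSpan_nonneg e) (by linarith [halfSpan_le e, pi_pos])
  rw [chordLength_eq_two_mul_sin]
  linarith

lemma chordLength_le_two (e : ℝ × ℝ) : chordLength e ≤ 2 := by
  rw [chordLength_eq_two_mul_sin]
  linarith [sin_le_one (halfSpan e)]

lemma saving_nonneg (e : ℝ × ℝ) : 0 ≤ saving e := by
  rw [saving_eq_two_mul_halfSpan_sub, chordLength_eq_two_mul_sin]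
  linarith [sin_le (halfSpan_nonneg e)]

lemma two_sub_sq_defect_le_chordLength (e : ℝ × ℝ) : 2 - defect e ^ 2 ≤ chordLength e := by
  rw [chordLength_eq_two_mul_cos]
  linarith [one_sub_sq_div_two_le_cos (x := defect e)]

lemma two_sub_chordLength_le (e : ℝ × ℝ) : 2 - chordLength e ≤ 2 * defect e := by
  have hJordan := one_sub_mul_le_cos (defect_nonneg e) (defect_le e)
  have hslope : 2 / π * defect e ≤ defect e :=
    mul_le_of_le_one_left (defect_nonneg e) ((div_le_one pi_pos).2 two_le_pi)
  rw [chordLength_eq_two_mul_cos]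
  linarith

lemma halfSpan_le_chordLength (e : ℝ × ℝ) : halfSpan e ≤ chordLength e := by
  have hJordan := mul_le_sin (halfSpan_nonneg e) (halfSpan_le e)
  have hslope : halfSpan e ≤ 2 * (2 / π * halfSpan e) := by
    rw [← mul_assoc, ← mul_div_assoc]
    have hslope_ge : 1 ≤ 2 * 2 / π := (one_le_div pi_pos).2 (by linarith [pi_le_four])
    exact le_mul_of_one_le_left (halfSpan_nonneg e) hslope_ge
  rw [chordLength_eq_two_mul_sin]
  linarith

lemma chordLength_swap (e : ℝ × ℝ) : chordLength e.swap = chordLength e := by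
  simp only [chordLength, chordLen, Prod.fst_swap, Prod.snd_swap, arcDist_comm e.2]

lemma saving_swap (e : ℝ × ℝ) : saving e.swap = saving e := by
  rw [saving, saving, chordLength_swap, Prod.fst_swap, Prod.snd_swap, arcDist_comm]

lemma access_swap (e : ℝ × ℝ) (p q : ℝ) : access e.swap p q = access e p q := min_comm _ _

lemma access_comm (e : ℝ × ℝ) (p q : ℝ) : access e p q = access e q p := by
  simp only [access, min_comm, add_comm]

/-! ### Midpoints -/

lemma access_congr {e f : ℝ × ℝ} {p p' q q' : ℝ} (h₁ : (e.1 : AddCircle (2 * π)) = f.1)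
    (h₂ : (e.2 : AddCircle (2 * π)) = f.2) (hp : (p : AddCircle (2 * π)) = p')
    (hq : (q : AddCircle (2 * π)) = q') : access e p q = access f p' q' := by
  simp only [access, arcDist_congr hp h₁, arcDist_congr hp h₂, arcDist_congr hq h₁,
    arcDist_congr hq h₂]

lemma exists_endpoints_eq_chordAt (e : ℝ × ℝ) :
    ∃ μ, ((e.1 : AddCircle (2 * π)) = (chordAt μ (halfSpan e)).1 ∧
        (e.2 : AddCircle (2 * π)) = (chordAt μ (halfSpan e)).2) ∨
      ((e.1 : AddCircle (2 * π)) = (chordAt μ (halfSpan e)).2 ∧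
        (e.2 : AddCircle (2 * π)) = (chordAt μ (halfSpan e)).1) := by
  obtain ⟨n, hn⟩ := exists_arcDist_eq_abs e.1 e.2
  refine ⟨(e.1 + 2 * π * n + e.2) / 2, ?_⟩
  rw [← coe_add_two_pi_mul e.1 n]
  simp only [chordAt, halfSpan, hn]
  rcases abs_cases (e.1 - e.2 + 2 * π * n) with ⟨habs, -⟩ | ⟨habs, -⟩
  · right
    constructor <;> rw [habs] <;> ring_nf
  · left
    constructor <;> rw [habs] <;> ring_nf

/-- The midpoint of the shorter arc spanned by the chord `e`; for a diameter it is one of the two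
midpoints of half circles. -/
noncomputable def mid (e : ℝ × ℝ) : ℝ := (exists_endpoints_eq_chordAt e).choose

lemma access_eq_access_chordAt (e : ℝ × ℝ) (p q : ℝ) :
    access e p q = access (chordAt (mid e) (halfSpan e)) p q := by
  rcases (exists_endpoints_eq_chordAt e).choose_spec with ⟨h₁, h₂⟩ | ⟨h₁, h₂⟩
  · exact access_congr h₁ h₂ rfl rfl
  · rw [← access_swap]
    exact access_congr h₂ h₁ rfl rfl

lemma arcDist_mid_fst_le (e : ℝ × ℝ) : arcDist (mid e) e.1 ≤ halfSpan e := by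
  have hφ := abs_of_nonneg (halfSpan_nonneg e)
  rcases (exists_endpoints_eq_chordAt e).choose_spec with ⟨h, -⟩ | ⟨h, -⟩ <;>
    refine (arcDist_congr rfl h).trans_le ((arcDist_le_abs _ _).trans_eq ?_) <;>
    simp [chordAt, mid, hφ]

lemma arcDist_mid_snd_le (e : ℝ × ℝ) : arcDist (mid e) e.2 ≤ halfSpan e := by
  have hφ := abs_of_nonneg (halfSpan_nonneg e)
  rcases (exists_endpoints_eq_chordAt e).choose_spec with ⟨-, h⟩ | ⟨-, h⟩ <;>
    refine (arcDist_congr rfl h).trans_le ((arcDist_le_abs _ _).trans_eq ?_) <;>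
    simp [chordAt, mid, hφ]

lemma coe_chordAt_add_pi (μ φ : ℝ) :
    ((chordAt (μ + π) (π - φ)).1 : AddCircle (2 * π)) = (chordAt μ φ).2 ∧
      ((chordAt (μ + π) (π - φ)).2 : AddCircle (2 * π)) = (chordAt μ φ).1 := by
  rw [← coe_add_two_pi_mul (chordAt μ φ).1 1]
  simp only [chordAt]
  push_cast
  constructor <;> ring_nf

lemma access_chordAt_add_pi (μ φ p q : ℝ) :
    access (chordAt (μ + π) (π - φ)) p q = access (chordAt μ φ) p q := by
  obtain ⟨h₁, h₂⟩ := coe_chordAt_add_pi μ φ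
  rw [← access_swap (chordAt μ φ)]
  exact access_congr h₁ h₂ rfl rfl

lemma arcDist_lt_of_arcDist_add_lt {m μ x φ ρ : ℝ} (hφ : 0 ≤ φ) (hφπ : φ ≤ π) (hρ : ρ ≤ 2 * x)
    (hx : 2 * x + ρ ≤ 2 * π)
    (h : arcDist (m - x) (μ - φ) + arcDist (m + x) (μ + φ) < ρ) :
    arcDist m μ < ρ / 2 ∧ |2 * x - 2 * φ| < ρ := by
  obtain ⟨n, hn⟩ := exists_arcDist_eq_abs (m - x) (μ - φ)
  obtain ⟨k, hk⟩ := exists_arcDist_eq_abs (m + x) (μ + φ)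
  set a := m - x - (μ - φ) + 2 * π * n with ha
  set b := m + x - (μ + φ) + 2 * π * k with hb
  rw [hn, hk] at h
  have hsub : |b - a| < ρ := (abs_sub b a).trans_lt (by linarith)
  have hkn : k = n := by
    have hdiff : b - a = 2 * (x - φ) + 2 * π * (k - n : ℤ) := by rw [ha, hb]; push_cast; ring
    rw [hdiff, abs_lt] at hsub
    have hlt : (k - n : ℤ) < 1 := by
      by_contra! hge
      have : (1 : ℝ) ≤ (k - n : ℤ) := by exact_mod_cast hge
      nlinarith [pi_pos]
    have hgt : -1 < (k - n : ℤ) := by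
      by_contra! hle
      have : ((k - n : ℤ) : ℝ) ≤ -1 := by exact_mod_cast hle
      nlinarith [pi_pos]
    lia
  subst hkn
  constructor
  · have hadd : |b + a| < ρ := (abs_add_le b a).trans_lt (by linarith)
    have hmid : m - μ + 2 * π * k = (b + a) / 2 := by rw [ha, hb]; ring
    calc arcDist m μ ≤ |m - μ + 2 * π * k| := arcDist_le_abs_add m μ k
      _ = |b + a| / 2 := by rw [hmid, abs_div, abs_of_pos (two_pos (α := ℝ))]
      _ < ρ / 2 := by linarith
  · have hdiff : b - a = 2 * x - 2 * φ := by rw [ha, hb]; ring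
    rwa [← hdiff]

lemma mid_near_of_access_lt {e : ℝ × ℝ} {m ξ ρ : ℝ} (hρ : ρ ≤ ξ) (hξ : ξ ≤ π)
    (h : access e (m - ξ / 2) (m + ξ / 2) < ρ) :
    (arcDist m (mid e) < ρ / 2 ∧ ξ - π + 2 * defect e < ρ) ∨
      (arcDist m (mid e + π) < ρ / 2 ∧ π - ξ + 2 * defect e < ρ) := by
  have hφ₀ := halfSpan_nonneg e
  have hφ := halfSpan_le e
  have hπ := pi_pos
  have hdefect : defect e = π / 2 - halfSpan e := rfl
  rw [access_eq_access_chordAt] at h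
  rcases min_lt_iff.1 h with h' | h'
  · obtain ⟨hmid, hlen⟩ :=
      arcDist_lt_of_arcDist_add_lt hφ₀ (by linarith) (by linarith) (by linarith) h'
    exact Or.inl ⟨hmid, by linarith [(abs_lt.1 hlen).2]⟩
  · obtain ⟨h₁, h₂⟩ := coe_chordAt_add_pi (mid e) (halfSpan e)
    rw [← arcDist_congr rfl h₁, ← arcDist_congr rfl h₂] at h'
    obtain ⟨hmid, hlen⟩ :=
      arcDist_lt_of_arcDist_add_lt (by linarith) (by linarith) (by linarith) (by linarith) h'
    exact Or.inr ⟨hmid, by linarith [(abs_lt.1 hlen).1]⟩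

/-! ### Covering the circle by arcs -/

lemma two_pi_le_sum_of_arcs_cover {ι : Type*} {J : Finset ι} {c r : ι → ℝ}
    (hr : ∀ j ∈ J, 0 ≤ r j) (hcover : ∀ m, ∃ j ∈ J, arcDist m (c j) ≤ r j / 2) :
    2 * π ≤ ∑ j ∈ J, r j := by
  have : Fact (0 < 2 * π) := ⟨two_pi_pos⟩
  have huniv : (Set.univ : Set (AddCircle (2 * π)))
      ⊆ ⋃ j ∈ J, Metric.closedBall ((c j : ℝ) : AddCircle (2 * π)) (r j / 2) := by
    intro z _
    obtain ⟨m, rfl⟩ := QuotientAddGroup.mk_surjective z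
    obtain ⟨j, hj, hm⟩ := hcover m
    exact Set.mem_biUnion hj (by rwa [Metric.mem_closedBall, ← arcDist_eq_dist])
  have hmeasure : ENNReal.ofReal (2 * π) ≤ ENNReal.ofReal (∑ j ∈ J, r j) := by
    rw [← AddCircle.measure_univ, ENNReal.ofReal_sum_of_nonneg hr]
    refine (measure_mono huniv).trans ((measure_biUnion_finset_le J _).trans ?_)
    refine Finset.sum_le_sum fun j _ => ?_
    rw [AddCircle.volume_closedBall]
    exact ENNReal.ofReal_le_ofReal ((min_le_right _ _).trans_eq (by ring))
  exact (ENNReal.ofReal_le_ofReal_iff (Finset.sum_nonneg hr)).1 hmeasure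

lemma two_pi_le_add_sum_of_arcs_cover {ι : Type*} {J : Finset ι} {c r : ι → ℝ} {c₀ r₀ : ℝ}
    (hr₀ : 0 ≤ r₀) (hr : ∀ j ∈ J, 0 ≤ r j)
    (hcover : ∀ m, r₀ / 2 < arcDist m c₀ → ∃ j ∈ J, arcDist m (c j) ≤ r j / 2) :
    2 * π ≤ r₀ + ∑ j ∈ J, r j := by
  have h := two_pi_le_sum_of_arcs_cover (J := J.insertNone) (c := fun j => j.elim c₀ c)
    (r := fun j => j.elim r₀ r)
  rw [Finset.sum_insertNone] at h
  refine h (Finset.forall_mem_insertNone.2 ⟨hr₀, hr⟩) fun m => ?_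
  by_cases hm : arcDist m c₀ ≤ r₀ / 2
  · exact ⟨none, Finset.none_mem_insertNone, hm⟩
  · obtain ⟨j, hj, hmj⟩ := hcover m (not_le.1 hm)
    exact ⟨some j, Finset.some_mem_insertNone.2 hj, hmj⟩

/-- The total length of the (at most two) arcs formed by the midpoints of those arcs of length `ξ`
which the chord `e` can serve within budget `b`: one arc is centred at `mid e`, the other one, where
`e` is used in the opposite orientation, at the antipode of `mid e`. -/
noncomputable def servedWidth (ξ b : ℝ) (e : ℝ × ℝ) : ℝ :=
  (if ξ - π + 2 * defect e < b then b else 0) + if π - ξ + 2 * defect e < b then b else 0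

lemma two_pi_le_sum_servedWidth {J : Finset (ℝ × ℝ)} {ρ : ℝ × ℝ → ℝ} {ξ : ℝ} (hξ : ξ ≤ π)
    (hρ₀ : ∀ e ∈ J, 0 ≤ ρ e) (hρ : ∀ e ∈ J, ρ e ≤ ξ)
    (h : ∀ m, ∃ e ∈ J, access e (m - ξ / 2) (m + ξ / 2) < ρ e) :
    2 * π ≤ ∑ e ∈ J, servedWidth ξ (ρ e) e := by
  have hcover := two_pi_le_sum_of_arcs_cover (J := J.disjSum J)
    (c := Sum.elim mid fun e => mid e + π)
    (r := Sum.elim (fun e => if ξ - π + 2 * defect e < ρ e then ρ e else 0)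
      fun e => if π - ξ + 2 * defect e < ρ e then ρ e else 0)
  rw [Finset.sum_disjSum, ← Finset.sum_add_distrib] at hcover
  refine hcover ?_ fun m => ?_
  · simp only [Finset.mem_disjSum]
    rintro _ (⟨e, he, rfl⟩ | ⟨e, he, rfl⟩) <;> simp only [Sum.elim_inl, Sum.elim_inr] <;>
      split_ifs <;> simp [hρ₀ e he]
  · obtain ⟨e, he, hlt⟩ := h m
    rcases mid_near_of_access_lt (hρ e he) hξ hlt with ⟨hmid, hlen⟩ | ⟨hmid, hlen⟩
    · refine ⟨.inl e, Finset.inl_mem_disjSum.2 he, ?_⟩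
      simpa only [Sum.elim_inl, if_pos hlen] using hmid.le
    · refine ⟨.inr e, Finset.inr_mem_disjSum.2 he, ?_⟩
      simpa only [Sum.elim_inr, if_pos hlen] using hmid.le

lemma servedWidth_le_of_no_second {ξ b : ℝ} {e : ℝ × ℝ} (hb : 0 ≤ b)
    (h : b ≤ π - ξ + 2 * defect e) : servedWidth ξ b e ≤ b := by
  rw [servedWidth, if_neg h.not_gt, add_zero]
  split_ifs <;> linarith

lemma servedWidth_le_two_mul {ξ b : ℝ} {e : ℝ × ℝ} (hb : 0 ≤ b) : servedWidth ξ b e ≤ 2 * b := by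
  unfold servedWidth
  split_ifs <;> linarith

/-! ### Walks -/

lemma walkCost_nil (q p : ℝ) : walkCost q p [] = arcDist p q := rfl

lemma walkCost_cons (q p : ℝ) (e : ℝ × ℝ) (L : List (ℝ × ℝ)) :
    walkCost q p (e :: L) = arcDist p e.1 + chordLength e + walkCost q e.2 L := rfl

lemma walkCost_nonneg (q p : ℝ) (L : List (ℝ × ℝ)) : 0 ≤ walkCost q p L := by
  induction L generalizing p with
  | nil => exact arcDist_nonneg p q
  | cons e L ih =>
    rw [walkCost_cons]
    exact add_nonneg (add_nonneg (arcDist_nonneg _ _) (chordLength_nonneg e)) (ih e.2)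

lemma sum_chordLength_le_walkCost (q p : ℝ) (L : List (ℝ × ℝ)) :
    (L.map chordLength).sum ≤ walkCost q p L := by
  induction L generalizing p with
  | nil => exact arcDist_nonneg p q
  | cons e L ih =>
    rw [List.map_cons, List.sum_cons, walkCost_cons]
    linarith [ih e.2, arcDist_nonneg p e.1]

lemma arcDist_le_walkCost_add_sum_saving (q p : ℝ) (L : List (ℝ × ℝ)) :
    arcDist p q ≤ walkCost q p L + (L.map saving).sum := by
  induction L generalizing p with
  | nil => exact (add_zero (arcDist p q)).ge
  | cons e L ih =>
    rw [List.map_cons, List.sum_cons, walkCost_cons, saving]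
    linarith [ih e.2, arcDist_triangle p e.1 q, arcDist_triangle e.1 e.2 q]

lemma arcDist_add_chordLength_add_arcDist_le (q p : ℝ) (A : List (ℝ × ℝ)) (e : ℝ × ℝ)
    (B : List (ℝ × ℝ)) : arcDist p e.1 + chordLength e + arcDist e.2 q
      ≤ walkCost q p (A ++ e :: B) + ((A ++ B).map saving).sum := by
  induction A generalizing p with
  | nil =>
    rw [List.nil_append, List.nil_append, walkCost_cons]
    linarith [arcDist_le_walkCost_add_sum_saving q e.2 B]
  | cons f A ih =>
    rw [List.cons_append, List.cons_append, walkCost_cons, List.map_cons, List.sum_cons, saving]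
    linarith [ih f.2, arcDist_triangle p f.1 e.1, arcDist_triangle f.1 f.2 e.1]

lemma access_le_walkCost (q p : ℝ) (A : List (ℝ × ℝ)) (e : ℝ × ℝ) (B : List (ℝ × ℝ)) :
    access e p q
      ≤ walkCost q p (A ++ e :: B) - chordLength e + ((A ++ B).map saving).sum := by
  have hvia := arcDist_add_chordLength_add_arcDist_le q p A e B
  have hmin : access e p q ≤ arcDist p e.1 + arcDist q e.2 := min_le_left _ _
  rw [arcDist_comm q] at hmin
  linarith

lemma walkCost_le_arcDist_add (q p p' : ℝ) (L : List (ℝ × ℝ)) :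
    walkCost q p L ≤ arcDist p p' + walkCost q p' L := by
  cases L with
  | nil => exact arcDist_triangle p p' q
  | cons e L =>
    rw [walkCost_cons, walkCost_cons]
    linarith [arcDist_triangle p p' e.1]

lemma chordLength_add_walkCost_le_walkCost_append (q p : ℝ) (A : List (ℝ × ℝ)) (e : ℝ × ℝ)
    (B : List (ℝ × ℝ)) : chordLength e + walkCost q e.2 B ≤ walkCost q p (A ++ e :: B) := by
  induction A generalizing p with
  | nil =>
    rw [List.nil_append, walkCost_cons]
    linarith [arcDist_nonneg p e.1]
  | cons f A ih =>
    rw [List.cons_append, walkCost_cons]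
    linarith [ih f.2, arcDist_nonneg p f.1, chordLength_nonneg f]

lemma exists_sublist_walkCost_le (q p : ℝ) (L : List (ℝ × ℝ)) :
    ∃ L', L'.Sublist L ∧ (L'.Pairwise fun e f => f ≠ e ∧ f ≠ e.swap) ∧
      walkCost q p L' ≤ walkCost q p L := by
  induction L generalizing p with
  | nil => exact ⟨[], List.Sublist.slnil, List.Pairwise.nil, le_rfl⟩
  | cons e L ih =>
    obtain ⟨L', hsub, hpair, hcost⟩ := ih e.2
    by_cases he : e ∈ L'
    · obtain ⟨A, B, rfl⟩ := List.append_of_mem he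
      have htail := List.sublist_append_right A (e :: B)
      refine ⟨e :: B, (htail.trans hsub).cons e, hpair.sublist htail, ?_⟩
      rw [walkCost_cons, walkCost_cons]
      linarith [chordLength_add_walkCost_le_walkCost_append q e.2 A e B, chordLength_nonneg e]
    · by_cases he' : e.swap ∈ L'
      · obtain ⟨A, B, rfl⟩ := List.append_of_mem he'
        have htail := (List.sublist_cons_self e.swap B).trans (List.sublist_append_right A _)
        refine ⟨B, (htail.trans hsub).cons e, hpair.sublist htail, ?_⟩
        rw [walkCost_cons]
        linarith [chordLength_add_walkCost_le_walkCost_append q e.2 A e.swap B,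
          chordLength_nonneg e.swap, chordLength_nonneg e, walkCost_le_arcDist_add q p e.1 B,
          congrArg (walkCost q · B) e.snd_swap]
      · refine ⟨e :: L', hsub.cons_cons e, List.pairwise_cons.2 ⟨fun f hf => ⟨?_, ?_⟩, hpair⟩, ?_⟩
        · rintro rfl
          exact he hf
        · rintro rfl
          exact he' hf
        · rw [walkCost_cons, walkCost_cons]
          linarith

lemma bddBelow_walkCosts (S : Finset (ℝ × ℝ)) (p q : ℝ) : BddBelow {c | ∃ L : List (ℝ × ℝ),
    (∀ e ∈ L, e ∈ S ∨ e.swap ∈ S) ∧ c = walkCost q p L} := by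
  refine ⟨0, ?_⟩
  rintro _ ⟨L, -, rfl⟩
  exact walkCost_nonneg q p L

lemma exists_walk_of_dS_lt {S : Finset (ℝ × ℝ)} {p q t : ℝ} (h : dS S p q < t) :
    ∃ L : List (ℝ × ℝ), (∀ e ∈ L, e ∈ S ∨ e.swap ∈ S) ∧
      (L.Pairwise fun e f => f ≠ e ∧ f ≠ e.swap) ∧ walkCost q p L < t := by
  obtain ⟨_, ⟨L, hL, rfl⟩, hlt⟩ :=
    (csInf_lt_iff (bddBelow_walkCosts S p q) ⟨_, [], by simp, rfl⟩).1 h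
  obtain ⟨L', hsub, hpair, hcost⟩ := exists_sublist_walkCost_le q p L
  exact ⟨L', fun e he => hL e (hsub.subset he), hpair, hcost.trans_lt hlt⟩

/-! ### Access budgets -/

lemma saving_le_mul_chordLength_pow {e : ℝ × ℝ} (h : chordLength e ≤ 1.4) :
    saving e ≤ 0.058 * chordLength e ^ 3 := by
  have hφ₀ := halfSpan_nonneg e
  rw [saving_eq_two_mul_halfSpan_sub]
  rw [chordLength_eq_two_mul_sin] at h ⊢
  set φ := halfSpan e
  have hφ : φ ≤ 0.78 := by
    by_contra! hlt
    have hmono : sin 0.78 ≤ sin φ :=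
      sin_le_sin_of_le_of_le_pi_div_two (by linarith [pi_pos]) (halfSpan_le e) hlt.le
    linarith [sin_ge_sub_cube (x := 0.78) (by norm_num)]
  have hcube := sin_ge_sub_cube hφ₀
  have hratio : 0.8986 * φ ≤ sin φ := by nlinarith [mul_nonneg hφ₀ (sub_nonneg.2 hφ)]
  have hratio_cube : (0.8986 * φ) ^ 3 ≤ sin φ ^ 3 := by gcongr
  nlinarith [pow_nonneg hφ₀ 3]

lemma sum_saving_le_mul_sum_chordLength {L : List (ℝ × ℝ)} {M : ℝ} (hM : M ≤ 1.4)
    (h : ∀ e ∈ L, chordLength e ≤ M) :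
    (L.map saving).sum ≤ 0.058 * M ^ 2 * (L.map chordLength).sum := by
  rw [← List.sum_map_mul_left]
  refine List.sum_le_sum fun e he => (saving_le_mul_chordLength_pow ((h e he).trans hM)).trans ?_
  have hsq : chordLength e ^ 2 ≤ M ^ 2 := pow_le_pow_left₀ (chordLength_nonneg e) (h e he) 2
  nlinarith [mul_le_mul_of_nonneg_right hsq (chordLength_nonneg e)]

/-- An upper bound for the arc length left to walks of length less than `π / 2 + 1` that use the
chord `e`, after crediting the savings of the other chords; these have total length at most
`π / 2 + 1 - |e|`. -/
noncomputable def budget (e : ℝ × ℝ) : ℝ :=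
  (τ - chordLength e) + 0.058 * (τ - chordLength e) ^ 3

lemma sub_chordLength_nonneg (e : ℝ × ℝ) : 0 ≤ τ - chordLength e := by
  linarith [chordLength_le_two e, pi_gt_three]

lemma budget_nonneg (e : ℝ × ℝ) : 0 ≤ budget e := by
  have := sub_chordLength_nonneg e
  unfold budget
  positivity

lemma budget_le {e : ℝ × ℝ} {b : ℝ} (h : 2.5708 - b ≤ chordLength e) :
    budget e ≤ b + 0.058 * b ^ 3 := by
  have h₀ := sub_chordLength_nonneg e
  have hb : τ - chordLength e ≤ b := by linarith [pi_lt_d4]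
  unfold budget
  gcongr

lemma budget_le_of_defect_le {e : ℝ × ℝ} {y : ℝ} (h : defect e ≤ y) :
    budget e ≤ 0.5708 + y ^ 2 + 0.058 * (0.5708 + y ^ 2) ^ 3 := by
  have hsq : defect e ^ 2 ≤ y ^ 2 := pow_le_pow_left₀ (defect_nonneg e) h 2
  exact budget_le (by linarith [two_sub_sq_defect_le_chordLength e])

lemma budget_le_of_long {e : ℝ × ℝ} (h : 1.4 ≤ chordLength e) : budget e ≤ 1.264 :=
  (budget_le (b := 1.1708) (by linarith)).trans (by norm_num)

lemma budget_le_of_wide {e : ℝ × ℝ} (h : defect e < 0.364) : budget e ≤ 0.7235 :=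
  (budget_le_of_defect_le h.le).trans (by norm_num)

lemma budget_le_sq_defect_add {e : ℝ × ℝ} {c : ℝ} (h : 2.5708 - c ≤ chordLength e) :
    budget e ≤ 0.5708 + defect e ^ 2 + 0.058 * c ^ 3 := by
  have h₀ := sub_chordLength_nonneg e
  have hc : (τ - chordLength e) ^ 3 ≤ c ^ 3 :=
    pow_le_pow_left₀ h₀ (by linarith [pi_lt_d4]) 3
  unfold budget
  linarith [two_sub_sq_defect_le_chordLength e, pi_lt_d4]

lemma defect_lt_of_two_mul_defect_lt_budget {e : ℝ × ℝ} (hlong : 1.4 ≤ chordLength e)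
    (h : 2 * defect e < budget e) : defect e < 0.364 := by
  have hy := defect_nonneg e
  have hcrude : defect e < 0.632 := by linarith [budget_le_of_long hlong]
  have hbetter : defect e < 0.421 := by
    nlinarith [budget_le_sq_defect_add (e := e) (c := 1.1708) (by linarith)]
  nlinarith [budget_le_sq_defect_add (e := e) (c := 0.74805)
    (by nlinarith [two_sub_sq_defect_le_chordLength e])]

lemma long_of_wide {e : ℝ × ℝ} (h : defect e < 0.364) : 1.4 ≤ chordLength e := by
  nlinarith [defect_nonneg e, two_sub_sq_defect_le_chordLength e]

lemma budget_swap (e : ℝ × ℝ) : budget e.swap = budget e := by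
  rw [budget, budget, chordLength_swap]

lemma access_lt_budget {L : List (ℝ × ℝ)} {e : ℝ × ℝ} {p q : ℝ} (he : e ∈ L)
    (hlong : 1.4 ≤ chordLength e) (hwalk : walkCost q p L < τ) : access e p q < budget e := by
  obtain ⟨A, B, rfl⟩ := List.append_of_mem he
  have htotal : chordLength e + ((A ++ B).map chordLength).sum < τ := by
    have := sum_chordLength_le_walkCost q p (A ++ e :: B)
    simp only [List.map_append, List.map_cons, List.sum_append, List.sum_cons] at this ⊢
    linarith
  have hrest : ∀ f ∈ A ++ B, chordLength f ≤ τ - chordLength e := fun f hf => by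
    have hnonneg : ∀ x ∈ (A ++ B).map chordLength, 0 ≤ x := by
      rintro _ hx
      obtain ⟨g, -, rfl⟩ := List.mem_map.1 hx
      exact chordLength_nonneg g
    linarith [List.single_le_sum hnonneg _ (List.mem_map_of_mem hf)]
  have hsaving := sum_saving_le_mul_sum_chordLength (by linarith [pi_lt_d4]) hrest
  have hsq : 0 ≤ 0.058 * (τ - chordLength e) ^ 2 := by positivity
  have haccess := access_le_walkCost q p A e B
  unfold budget
  nlinarith [mul_le_mul_of_nonneg_left htotal.le hsq]

/-- The chords of `S` of length at least `1.4`; a walk of length less than `π / 2 + 1` contains at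
most one of them. -/
noncomputable def longChords (S : Finset (ℝ × ℝ)) : Finset (ℝ × ℝ) :=
  S.filter fun e => 1.4 ≤ chordLength e

/-- The chords of `S` close enough to a diameter to be of use for antipodal pairs of points. -/
noncomputable def wideChords (S : Finset (ℝ × ℝ)) : Finset (ℝ × ℝ) :=
  S.filter fun e => defect e < 0.364

lemma mem_longChords {S : Finset (ℝ × ℝ)} {e : ℝ × ℝ} :
    e ∈ longChords S ↔ e ∈ S ∧ 1.4 ≤ chordLength e := Finset.mem_filter

lemma mem_wideChords {S : Finset (ℝ × ℝ)} {e : ℝ × ℝ} :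
    e ∈ wideChords S ↔ e ∈ S ∧ defect e < 0.364 := Finset.mem_filter

lemma wideChords_subset_longChords (S : Finset (ℝ × ℝ)) : wideChords S ⊆ longChords S :=
  Finset.monotone_filter_right S fun _ _ => long_of_wide

lemma exists_mem_longChords_of_mem {S : Finset (ℝ × ℝ)} {L : List (ℝ × ℝ)} {e : ℝ × ℝ} {p q : ℝ}
    (hL : ∀ e ∈ L, e ∈ S ∨ e.swap ∈ S) (he : e ∈ L) (hlong : 1.4 ≤ chordLength e)
    (hwalk : walkCost q p L < τ) : ∃ i ∈ longChords S, access i p q < budget i := by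
  have haccess := access_lt_budget he hlong hwalk
  rcases hL e he with hS | hS
  · exact ⟨e, mem_longChords.2 ⟨hS, hlong⟩, haccess⟩
  · refine ⟨e.swap, mem_longChords.2 ⟨hS, hlong.trans_eq (chordLength_swap e).symm⟩, ?_⟩
    rwa [access_swap, budget_swap]

lemma exists_mem_longChords_access_lt {S : Finset (ℝ × ℝ)} {p q : ℝ} (hd : dS S p q < τ)
    (hpq : τ + 0.3 ≤ arcDist p q) : ∃ i ∈ longChords S, access i p q < budget i := by
  obtain ⟨L, hL, -, hwalk⟩ := exists_walk_of_dS_lt hd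
  by_cases hlong : ∃ e ∈ L, 1.4 ≤ chordLength e
  · obtain ⟨e, he, hlong⟩ := hlong
    exact exists_mem_longChords_of_mem hL he hlong hwalk
  · push Not at hlong
    have hsaving := sum_saving_le_mul_sum_chordLength le_rfl fun e he => (hlong e he).le
    linarith [arcDist_le_walkCost_add_sum_saving q p L, sum_chordLength_le_walkCost q p L, pi_lt_d4]

/-! ### Counting long chords -/

lemma sum_le_sum_add_mul_card {ι : Type*} {J W : Finset ι} {f : ι → ℝ} {b : ℝ} (hW : W ⊆ J)
    (hb : ∀ i ∈ J, i ∉ W → f i ≤ b) :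
    ∑ i ∈ J, f i ≤ ∑ i ∈ W, f i + b * (J.card - W.card) := by
  classical
  have hout := Finset.sum_le_card_nsmul (J \ W) f b fun i hi =>
    hb i (Finset.mem_sdiff.1 hi).1 (Finset.mem_sdiff.1 hi).2
  rw [nsmul_eq_mul, Finset.card_sdiff_of_subset hW, Nat.cast_sub (Finset.card_le_card hW)] at hout
  rw [← Finset.sum_sdiff hW]
  linarith

lemma sum_le_mul_card_add_mul_card {ι : Type*} {J W : Finset ι} {f : ι → ℝ} {a b : ℝ}
    (hW : W ⊆ J) (ha : ∀ i ∈ W, f i ≤ a) (hb : ∀ i ∈ J, i ∉ W → f i ≤ b) :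
    ∑ i ∈ J, f i ≤ a * W.card + b * (J.card - W.card) := by
  have hin := Finset.sum_le_card_nsmul W f a ha
  rw [nsmul_eq_mul] at hin
  linarith [sum_le_sum_add_mul_card hW hb]

lemma pi_le_sum_wideChords {S : Finset (ℝ × ℝ)} {ρ : ℝ × ℝ → ℝ}
    (hρ₀ : ∀ e ∈ longChords S, 0 ≤ ρ e) (hρ : ∀ e ∈ longChords S, ρ e ≤ budget e)
    (h : ∀ m, ∃ e ∈ longChords S, access e (m - π / 2) (m + π / 2) < ρ e) :
    π ≤ ∑ e ∈ wideChords S, ρ e := by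
  classical
  have hcover := two_pi_le_sum_servedWidth le_rfl hρ₀ (fun e he => (hρ e he).trans (by
      linarith [budget_le_of_long (mem_longChords.1 he).2, pi_gt_three])) h
  have hterm : ∀ e ∈ longChords S,
      servedWidth π (ρ e) e ≤ if e ∈ wideChords S then 2 * ρ e else 0 := fun e he => by
    obtain ⟨heS, hlong⟩ := mem_longChords.1 he
    split_ifs with hwide
    · exact servedWidth_le_two_mul (hρ₀ e he)
    · have hdefect : ρ e ≤ 2 * defect e := by
        by_contra! hlt
        exact hwide (mem_wideChords.2
          ⟨heS, defect_lt_of_two_mul_defect_lt_budget hlong (hlt.trans_le (hρ e he))⟩)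
      rw [servedWidth, sub_self, zero_add, if_neg hdefect.not_gt, add_zero]
  have hsum := hcover.trans (Finset.sum_le_sum hterm)
  rw [Finset.sum_ite_mem, Finset.inter_eq_right.2 (wideChords_subset_longChords S),
    ← Finset.mul_sum] at hsum
  linarith

lemma five_le_card_wideChords {S : Finset (ℝ × ℝ)} (hS : ∀ p q, dS S p q < τ) :
    5 ≤ (wideChords S).card := by
  have hsum := pi_le_sum_wideChords (fun e _ => budget_nonneg e) (fun e _ => le_rfl) fun m =>
    exists_mem_longChords_access_lt (hS _ _) (by
      linarith [le_arcDist_sub_add m le_rfl, pi_gt_d4])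
  have hle := hsum.trans (Finset.sum_le_card_nsmul _ _ _ fun e he =>
    budget_le_of_wide (mem_wideChords.1 he).2)
  rw [nsmul_eq_mul] at hle
  by_contra! hlt
  have : ((wideChords S).card : ℝ) ≤ 4 := by exact_mod_cast Nat.le_of_lt_succ hlt
  linarith [pi_gt_d4]

lemma access_lt_of_walkCost_singleton {e : ℝ × ℝ} {p q t : ℝ} (h : walkCost q p [e] < t) :
    access e p q < t - chordLength e := by
  have := access_le_walkCost q p [] e []
  simp only [List.nil_append, List.map_nil, List.sum_nil] at this
  linarith

lemma exists_access_lt_of_forall_long {S : Finset (ℝ × ℝ)} {p q : ℝ} (hd : dS S p q < τ)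
    (hpq : τ ≤ arcDist p q) (hlong : ∀ i ∈ S, 1.4 ≤ chordLength i) :
    ∃ i ∈ S, access i p q < τ - chordLength i := by
  obtain ⟨L, hL, -, hwalk⟩ := exists_walk_of_dS_lt hd
  have hL_long : ∀ e ∈ L, 1.4 ≤ chordLength e := fun e he =>
    (hL e he).elim (hlong e) fun h => (hlong _ h).trans_eq (chordLength_swap e)
  match L with
  | [] => exact absurd hwalk hpq.not_gt
  | [e] =>
    have haccess := access_lt_of_walkCost_singleton hwalk
    rcases hL e List.mem_cons_self with he | he
    · exact ⟨e, he, haccess⟩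
    · exact ⟨e.swap, he, by rwa [access_swap, chordLength_swap]⟩
  | e :: f :: L =>
    rw [walkCost_cons, walkCost_cons] at hwalk
    linarith [hL_long e (by simp), hL_long f (by simp), arcDist_nonneg p e.1,
      arcDist_nonneg e.2 f.1, walkCost_nonneg q f.2 L, pi_lt_d4]

/-- In the second orientation, a chord is of no use for arcs of length `π / 2 + 1`: the budget left
by its own length does not cover the difference of lengths. -/
lemma sub_chordLength_le_second_orientation (e : ℝ × ℝ) :
    τ - chordLength e ≤ π - τ + 2 * defect e := by
  linarith [two_sub_chordLength_le e]

lemma card_longChords_le {S : Finset (ℝ × ℝ)} (hS : ∀ p q, dS S p q < τ) (hcard : S.card = 7) :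
    (longChords S).card ≤ 6 := by
  by_contra! hlt
  have hlong : ∀ i ∈ S, 1.4 ≤ chordLength i := Finset.filter_card_eq
    (le_antisymm (Finset.card_filter_le _ _) (hcard.trans_le hlt))
  have hcover := two_pi_le_sum_servedWidth (by linarith [pi_gt_d4])
    (fun e _ => sub_chordLength_nonneg e) (fun e he => by linarith [hlong e he, pi_gt_three])
    fun m => exists_access_lt_of_forall_long (hS _ _)
      (le_arcDist_sub_add m (by linarith [pi_gt_d4])) hlong
  have hsum := sum_le_mul_card_add_mul_card (J := S) (W := wideChords S)
    (f := fun e => servedWidth τ (τ - chordLength e) e) (a := 0.7235) (b := 1.1708)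
    (Finset.filter_subset _ S)
    (fun e he => by
      have hwide := (mem_wideChords.1 he).2
      nlinarith [servedWidth_le_of_no_second (sub_chordLength_nonneg e)
        (sub_chordLength_le_second_orientation e),
        two_sub_sq_defect_le_chordLength e, defect_nonneg e, pi_lt_d4])
    (fun e he _ => by
      linarith [servedWidth_le_of_no_second (sub_chordLength_nonneg e)
        (sub_chordLength_le_second_orientation e), hlong e he, pi_lt_d4])
  have hwide : (5 : ℝ) ≤ (wideChords S).card := by exact_mod_cast five_le_card_wideChords hS
  rw [hcard] at hsum
  push_cast at hsum
  linarith [pi_gt_d4]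

lemma servedWidth_le_of_wide {e : ℝ × ℝ} (hwide : defect e < 0.364) :
    servedWidth (τ + 0.3) (budget e) e ≤ 1.24 := by
  have hbudget := budget_le_of_wide hwide
  rcases le_or_gt (budget e) (π - (τ + 0.3) + 2 * defect e) with hsecond | hsecond
  · exact (servedWidth_le_of_no_second (budget_nonneg e) hsecond).trans (by linarith)
  · have hy : defect e ≤ 0.1757 := by
      nlinarith [defect_nonneg e, pi_gt_d4, budget_le_sq_defect_add (e := e) (c := 0.7033)
        (by nlinarith [two_sub_sq_defect_le_chordLength e, defect_nonneg e])]
    have hsmall : budget e ≤ 0.62 := (budget_le_of_defect_le hy).trans (by norm_num)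
    exact (servedWidth_le_two_mul (budget_nonneg e)).trans (by linarith)

lemma six_le_card_longChords {S : Finset (ℝ × ℝ)} (hS : ∀ p q, dS S p q < τ) :
    6 ≤ (longChords S).card := by
  by_contra! hlt
  have hwide : longChords S = wideChords S := (Finset.eq_of_subset_of_card_le
    (wideChords_subset_longChords S) (by linarith [five_le_card_wideChords hS])).symm
  have hbudget : ∀ e ∈ longChords S, budget e ≤ τ + 0.3 := fun e he => by
    linarith [budget_le_of_long (mem_longChords.1 he).2, pi_gt_three]
  have hlevel : τ + 0.3 ≤ π := by linarith [pi_gt_d4]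
  have hcover := two_pi_le_sum_servedWidth hlevel (fun e _ => budget_nonneg e) hbudget fun m =>
    exists_mem_longChords_access_lt (hS _ _) (le_arcDist_sub_add m hlevel)
  have hsum := hcover.trans (Finset.sum_le_card_nsmul _ _ 1.24 fun e he =>
    servedWidth_le_of_wide (mem_wideChords.1 (hwide ▸ he)).2)
  have : ((longChords S).card : ℝ) ≤ 5 := by exact_mod_cast Nat.le_of_lt_succ hlt
  rw [nsmul_eq_mul] at hsum
  linarith [pi_gt_d4]

/-! ### Walks through a single short chord -/

lemma arcDist_le_access_add (e : ℝ × ℝ) (p q : ℝ) :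
    arcDist p q ≤ access e p q + chordLength e + saving e := by
  have hspan : chordLength e + saving e = arcDist e.1 e.2 := by
    rw [saving]
    ring
  have h₁ := arcDist_triangle p e.1 q
  have h₂ := arcDist_triangle p e.2 q
  have h₁₂ := arcDist_triangle e.1 e.2 q
  have h₂₁ := arcDist_triangle e.2 e.1 q
  rw [arcDist_comm e.2 e.1] at h₂₁
  rcases min_choice (arcDist p e.1 + arcDist q e.2) (arcDist p e.2 + arcDist q e.1) with h | h <;>
    rw [access, h, arcDist_comm q] <;> linarith

/-- The chord `i` accommodates a walk of length less than `π / 2 + 1` from `p` to `q` which also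
traverses the chord `c`, before or after `i`. Only the consequences needed later are recorded. -/
def ServesWith (c i : ℝ × ℝ) (p q : ℝ) : Prop :=
  chordLength c + chordLength i < τ ∧ access i p q < τ - chordLength i + saving c ∧
    ((arcDist p (mid c) < τ - chordLength i ∧ access i (mid c) q < τ - chordLength i) ∨
      (arcDist q (mid c) < τ - chordLength i ∧ access i p (mid c) < τ - chordLength i))

lemma servesWith_of_walkCost_pair {c e f : ℝ × ℝ} {p q : ℝ} (he : e = c ∨ e = c.swap)
    (h : walkCost q p [e, f] < τ) : ServesWith c f p q := by
  have hlength : chordLength e = chordLength c := by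
    rcases he with rfl | rfl
    exacts [rfl, chordLength_swap c]
  have hsaving : saving e = saving c := by
    rcases he with rfl | rfl
    exacts [rfl, saving_swap c]
  have hmid₁ : arcDist e.1 (mid c) ≤ chordLength e := by
    rw [arcDist_comm, hlength]
    refine le_trans ?_ (halfSpan_le_chordLength c)
    rcases he with rfl | rfl
    exacts [arcDist_mid_fst_le e, arcDist_mid_snd_le c]
  have hmid₂ : arcDist (mid c) e.2 ≤ chordLength e := by
    rw [hlength]
    refine le_trans ?_ (halfSpan_le_chordLength c)
    rcases he with rfl | rfl
    exacts [arcDist_mid_snd_le e, arcDist_mid_fst_le c]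
  have haccess := access_le_walkCost q p [e] f []
  simp only [List.cons_append, List.nil_append, List.map_cons, List.map_nil, List.sum_cons,
    List.sum_nil, hsaving] at haccess
  have hf : access f (mid c) q ≤ arcDist (mid c) f.1 + arcDist q f.2 := min_le_left _ _
  rw [arcDist_comm q] at hf
  have harc := arcDist_nonneg
  simp only [walkCost_cons, walkCost_nil] at h haccess
  refine ⟨?_, by linarith, Or.inl ⟨?_, ?_⟩⟩
  · linarith [harc p e.1, harc e.2 f.1, harc f.2 q]
  · linarith [arcDist_triangle p e.1 (mid c), harc e.2 f.1, harc f.2 q]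
  · linarith [arcDist_triangle (mid c) e.2 f.1, harc p e.1]

lemma ServesWith.symm {c i : ℝ × ℝ} {p q : ℝ} (h : ServesWith c i p q) : ServesWith c i q p := by
  obtain ⟨hlength, haccess, hmid⟩ := h
  refine ⟨hlength, (access_comm i q p).trans_lt haccess, ?_⟩
  rw [access_comm i q, access_comm i (mid c) p]
  exact hmid.symm

lemma ServesWith.of_eq_or_eq_swap {c i j : ℝ × ℝ} {p q : ℝ} (h : ServesWith c j p q)
    (hj : j = i ∨ j = i.swap) : ServesWith c i p q := by
  rcases hj with rfl | rfl
  · exact h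
  · simpa only [ServesWith, chordLength_swap, access_swap] using h

lemma walkCost_pair_reverse (p q : ℝ) (e f : ℝ × ℝ) :
    walkCost p q [f.swap, e.swap] = walkCost q p [e, f] := by
  simp only [walkCost_cons, walkCost_nil, chordLength_swap, Prod.fst_swap, Prod.snd_swap]
  rw [arcDist_comm q, arcDist_comm f.1, arcDist_comm e.1]
  ring

lemma eq_or_exists_long {S : Finset (ℝ × ℝ)} {c e : ℝ × ℝ}
    (hc : ∀ i ∈ S, i ∉ longChords S → i = c) (he : e ∈ S ∨ e.swap ∈ S) :
    (e = c ∨ e = c.swap) ∨ ∃ i ∈ longChords S, e = i ∨ e = i.swap := by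
  rcases he with he | he
  · by_cases hlong : e ∈ longChords S
    · exact Or.inr ⟨e, hlong, Or.inl rfl⟩
    · exact Or.inl (Or.inl (hc e he hlong))
  · by_cases hlong : e.swap ∈ longChords S
    · exact Or.inr ⟨e.swap, hlong, Or.inr e.swap_swap.symm⟩
    · exact Or.inl (Or.inr (by rw [← hc _ he hlong, Prod.swap_swap]))

lemma long_of_eq_or_eq_swap {S : Finset (ℝ × ℝ)} {e : ℝ × ℝ}
    (he : ∃ i ∈ longChords S, e = i ∨ e = i.swap) : 1.4 ≤ chordLength e := by
  obtain ⟨i, hi, rfl | rfl⟩ := he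
  · exact (mem_longChords.1 hi).2
  · exact (mem_longChords.1 hi).2.trans_eq (chordLength_swap i).symm

lemma exists_servesWith_of_walkCost_pair {S : Finset (ℝ × ℝ)} {c e f : ℝ × ℝ} {p q : ℝ}
    (he : (e = c ∨ e = c.swap) ∨ ∃ i ∈ longChords S, e = i ∨ e = i.swap)
    (hf : (f = c ∨ f = c.swap) ∨ ∃ i ∈ longChords S, f = i ∨ f = i.swap)
    (hne : f ≠ e ∧ f ≠ e.swap) (h : walkCost q p [e, f] < τ) :
    ∃ i ∈ longChords S, ServesWith c i p q := by
  rcases he with he | ⟨i, hi, hei⟩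
  · rcases hf with hf | ⟨i, hi, hfi⟩
    · rcases he with rfl | rfl <;> rcases hf with rfl | rfl <;> simp at hne
    · exact ⟨i, hi, (servesWith_of_walkCost_pair he h).of_eq_or_eq_swap hfi⟩
  · rcases hf with hf | hf
    · rw [← walkCost_pair_reverse] at h
      have hf_swap : f.swap = c ∨ f.swap = c.swap := by
        rcases hf with rfl | rfl
        exacts [.inr rfl, .inl c.swap_swap]
      have hserves := (servesWith_of_walkCost_pair hf_swap h).of_eq_or_eq_swap (i := e) (.inr rfl)
      exact ⟨i, hi, hserves.symm.of_eq_or_eq_swap hei⟩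
    · have hlength := sum_chordLength_le_walkCost q p [e, f]
      simp only [List.map_cons, List.map_nil, List.sum_cons, List.sum_nil] at hlength
      linarith [long_of_eq_or_eq_swap ⟨i, hi, hei⟩, long_of_eq_or_eq_swap hf, pi_lt_d4]

lemma long_or_long_of_ne {S : Finset (ℝ × ℝ)} {c e f : ℝ × ℝ}
    (hc : ∀ i ∈ S, i ∉ longChords S → i = c) (he : e ∈ S ∨ e.swap ∈ S) (hf : f ∈ S ∨ f.swap ∈ S)
    (hne : f ≠ e ∧ f ≠ e.swap) : 1.4 ≤ chordLength e ∨ 1.4 ≤ chordLength f := by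
  rcases eq_or_exists_long hc he with he | he
  · rcases eq_or_exists_long hc hf with hf | hf
    · rcases he with rfl | rfl <;> rcases hf with rfl | rfl <;> simp at hne
    · exact Or.inr (long_of_eq_or_eq_swap hf)
  · exact Or.inl (long_of_eq_or_eq_swap he)

lemma exists_access_lt_or_servesWith {S : Finset (ℝ × ℝ)} {c : ℝ × ℝ} {p q : ℝ}
    (hc : ∀ i ∈ S, i ∉ longChords S → i = c) (hd : dS S p q < τ) (hpq : τ ≤ arcDist p q) :
    (∃ i ∈ longChords S, access i p q < τ - chordLength i) ∨ access c p q < τ - chordLength c ∨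
      ∃ i ∈ longChords S, ServesWith c i p q := by
  obtain ⟨L, hL, hpair, hwalk⟩ := exists_walk_of_dS_lt hd
  match L with
  | [] => exact absurd hwalk hpq.not_gt
  | [e] =>
    have haccess := access_lt_of_walkCost_singleton hwalk
    rcases eq_or_exists_long hc (hL e (by simp)) with (rfl | rfl) | ⟨i, hi, rfl | rfl⟩
    · exact .inr (.inl haccess)
    · exact .inr (.inl (by rwa [access_swap, chordLength_swap] at haccess))
    · exact .inl ⟨e, hi, haccess⟩
    · exact .inl ⟨i, hi, by rwa [access_swap, chordLength_swap] at haccess⟩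
  | [e, f] =>
    have he := eq_or_exists_long hc (hL e (by simp))
    have hf := eq_or_exists_long hc (hL f (by simp))
    exact .inr (.inr (exists_servesWith_of_walkCost_pair he hf (by simpa using hpair) hwalk))
  | e :: f :: g :: L =>
    simp only [List.pairwise_cons, List.mem_cons, forall_eq_or_imp] at hpair
    obtain ⟨⟨hef, heg, -⟩, ⟨hfg, -⟩, -⟩ := hpair
    have hL_nonneg := walkCost_nonneg q g.2 L
    have he := hL e (by simp)
    have hf := hL f (by simp)
    have hg := hL g (by simp)
    simp only [walkCost_cons] at hwalk
    rcases long_or_long_of_ne hc he hf hef with h₁ | h₁ <;>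
    rcases long_or_long_of_ne hc he hg heg with h₂ | h₂ <;>
    rcases long_or_long_of_ne hc hf hg hfg with h₃ | h₃ <;>
    linarith [chordLength_nonneg e, chordLength_nonneg f, chordLength_nonneg g, pi_lt_d4,
      arcDist_nonneg p e.1, arcDist_nonneg e.2 f.1, arcDist_nonneg f.2 g.1]

/-! ### Six long chords and a short one -/

/-- The arc length left to walks of length less than `π / 2 + 1` that use the chord `i` and no other
chord than possibly `c`, after crediting the saving of `c`. -/
noncomputable def jointBudget (c i : ℝ × ℝ) : ℝ :=
  τ - chordLength i + if chordLength c + chordLength i < τ then saving c else 0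

lemma sub_chordLength_le_jointBudget (c i : ℝ × ℝ) : τ - chordLength i ≤ jointBudget c i := by
  unfold jointBudget
  split_ifs <;> linarith [saving_nonneg c]

lemma jointBudget_nonneg (c i : ℝ × ℝ) : 0 ≤ jointBudget c i :=
  (sub_chordLength_nonneg i).trans (sub_chordLength_le_jointBudget c i)

lemma saving_le_of_short {c : ℝ × ℝ} (hc : chordLength c ≤ 1.4) : saving c ≤ 0.1592 := by
  have hcube : chordLength c ^ 3 ≤ 1.4 ^ 3 := pow_le_pow_left₀ (chordLength_nonneg c) hc 3
  linarith [saving_le_mul_chordLength_pow hc]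

lemma jointBudget_le_budget {c : ℝ × ℝ} (hc : chordLength c ≤ 1.4) (i : ℝ × ℝ) :
    jointBudget c i ≤ budget i := by
  unfold jointBudget budget
  split_ifs with h
  · have hcube : chordLength c ^ 3 ≤ (τ - chordLength i) ^ 3 :=
      pow_le_pow_left₀ (chordLength_nonneg c) (by linarith) 3
    linarith [saving_le_mul_chordLength_pow hc]
  · linarith [pow_nonneg (sub_chordLength_nonneg i) 3]

lemma exists_access_lt_jointBudget {S : Finset (ℝ × ℝ)} {c : ℝ × ℝ} {p q : ℝ}
    (hc : ∀ i ∈ S, i ∉ longChords S → i = c) (hd : dS S p q < τ)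
    (hpq : τ + saving c ≤ arcDist p q) :
    ∃ i ∈ longChords S, access i p q < jointBudget c i := by
  rcases exists_access_lt_or_servesWith hc hd (by linarith [saving_nonneg c]) with
    ⟨i, hi, h⟩ | h | ⟨i, hi, hlength, h, -⟩
  · exact ⟨i, hi, h.trans_le (sub_chordLength_le_jointBudget c i)⟩
  · linarith [arcDist_le_access_add c p q]
  · exact ⟨i, hi, by rwa [jointBudget, if_pos hlength]⟩

/-- The chord `i` can serve arcs of length `π / 2 + 1 + saving c` also in the second orientation. -/
def Flips (c i : ℝ × ℝ) : Prop := π - (τ + saving c) + 2 * defect i < jointBudget c i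

lemma defect_lt_of_flips {c i : ℝ × ℝ} (hc : chordLength c ≤ 1.4) (hi : Flips c i) :
    defect i < 0.364 := by
  have hsaving := saving_le_of_short hc
  have hjoint : jointBudget c i ≤ τ - chordLength i + saving c := by
    unfold jointBudget
    split_ifs <;> linarith [saving_nonneg c]
  unfold Flips at hi
  by_contra! hlt
  have hrange : 0 ≤ (defect i - 0.364) * (1.571 - defect i) :=
    mul_nonneg (by linarith) (by linarith [defect_le i, pi_lt_d4])
  nlinarith [two_sub_sq_defect_le_chordLength i]

lemma jointBudget_le_of_flips {c i : ℝ × ℝ} (hc : chordLength c ≤ 1.4) (hi : Flips c i) :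
    jointBudget c i ≤ 0.592 := by
  have hwide := defect_lt_of_flips hc hi
  have hy := defect_nonneg i
  have hlength := two_sub_sq_defect_le_chordLength i
  unfold Flips at hi
  unfold jointBudget at hi ⊢
  split_ifs at hi ⊢ with hsum
  · have hcube : chordLength c ^ 3 ≤ 0.7034 ^ 3 :=
      pow_le_pow_left₀ (chordLength_nonneg c) (by nlinarith [pi_lt_d4]) 3
    have hsaving : saving c ≤ 0.0202 := by linarith [saving_le_mul_chordLength_pow hc]
    have hsmall : defect i ≤ 0.03 := by nlinarith
    have hsq : defect i ^ 2 ≤ 0.03 ^ 2 := pow_le_pow_left₀ hy hsmall 2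
    linarith [pi_lt_d4]
  · have hsmall : defect i ≤ 0.1 := by nlinarith [saving_le_of_short hc]
    have hsq : defect i ^ 2 ≤ 0.1 ^ 2 := pow_le_pow_left₀ hy hsmall 2
    linarith [pi_lt_d4]

open Classical in
/-- An upper bound for `jointBudget c i` when `i` is wide. -/
noncomputable def widthBound (c i : ℝ × ℝ) : ℝ := if Flips c i then 0.592 else 0.7235

lemma widthBound_ge (c i : ℝ × ℝ) : 0.592 ≤ widthBound c i := by
  unfold widthBound
  split_ifs <;> norm_num

lemma widthBound_le (c i : ℝ × ℝ) : widthBound c i ≤ 0.7235 := by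
  unfold widthBound
  split_ifs <;> norm_num

lemma jointBudget_le_widthBound {c i : ℝ × ℝ} (hc : chordLength c ≤ 1.4) (hi : defect i < 0.364) :
    jointBudget c i ≤ widthBound c i := by
  unfold widthBound
  split_ifs with hflips
  · exact jointBudget_le_of_flips hc hflips
  · exact (jointBudget_le_budget hc i).trans (budget_le_of_wide hi)

lemma servedWidth_jointBudget_le_of_flips {c i : ℝ × ℝ} (hc : chordLength c ≤ 1.4)
    (hi : Flips c i) : servedWidth (τ + saving c) (jointBudget c i) i ≤ 1.184 := by
  linarith [servedWidth_le_two_mul (ξ := τ + saving c) (e := i) (jointBudget_nonneg c i),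
    jointBudget_le_of_flips hc hi]

lemma servedWidth_jointBudget_le {c i : ℝ × ℝ} (hc : chordLength c ≤ 1.4) (hi : ¬ Flips c i) :
    servedWidth (τ + saving c) (jointBudget c i) i ≤ budget i :=
  (servedWidth_le_of_no_second (jointBudget_nonneg c i) (not_lt.1 hi)).trans
    (jointBudget_le_budget hc i)

open Classical in
/-- The wide chords of `S` that flip with `c`. -/
noncomputable def flippingChords (c : ℝ × ℝ) (S : Finset (ℝ × ℝ)) : Finset (ℝ × ℝ) :=
  (wideChords S).filter (Flips c)

lemma mem_flippingChords {c i : ℝ × ℝ} {S : Finset (ℝ × ℝ)} :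
    i ∈ flippingChords c S ↔ i ∈ wideChords S ∧ Flips c i := by
  classical exact Finset.mem_filter

lemma flippingChords_subset (c : ℝ × ℝ) (S : Finset (ℝ × ℝ)) :
    flippingChords c S ⊆ wideChords S := fun _ hi => (mem_flippingChords.1 hi).1

lemma sum_widthBound_wideChords_le (c : ℝ × ℝ) (S : Finset (ℝ × ℝ)) :
    ∑ i ∈ wideChords S, widthBound c i ≤ 0.592 * (flippingChords c S).card +
      0.7235 * ((wideChords S).card - (flippingChords c S).card) :=
  sum_le_mul_card_add_mul_card (flippingChords_subset c S)
    (fun _ hi => (if_pos (mem_flippingChords.1 hi).2).le) fun i _ _ => widthBound_le c i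

lemma pi_le_sum_widthBound_wideChords {S : Finset (ℝ × ℝ)} {c : ℝ × ℝ}
    (hS : ∀ p q, dS S p q < τ) (hshort : chordLength c ≤ 1.4)
    (hc : ∀ i ∈ S, i ∉ longChords S → i = c) : π ≤ ∑ i ∈ wideChords S, widthBound c i :=
  (pi_le_sum_wideChords (ρ := jointBudget c) (fun i _ => jointBudget_nonneg c i)
    (fun i _ => jointBudget_le_budget hshort i) fun m =>
      exists_access_lt_jointBudget hc (hS _ _) (by
        linarith [le_arcDist_sub_add m le_rfl, saving_le_of_short hshort, pi_gt_d4])).trans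
    (Finset.sum_le_sum fun _ hi => jointBudget_le_widthBound hshort (mem_wideChords.1 hi).2)

lemma two_pi_le_card_flippingChords {S : Finset (ℝ × ℝ)} {c : ℝ × ℝ}
    (hS : ∀ p q, dS S p q < τ) (hshort : chordLength c ≤ 1.4)
    (hc : ∀ i ∈ S, i ∉ longChords S → i = c) :
    2 * π ≤ 1.184 * (flippingChords c S).card +
      0.7235 * ((wideChords S).card - (flippingChords c S).card) +
      1.264 * ((longChords S).card - (wideChords S).card) := by
  have hlevel : τ + saving c ≤ π := by linarith [saving_le_of_short hshort, pi_gt_d4]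
  have hbudget : ∀ i ∈ longChords S, jointBudget c i ≤ τ + saving c := fun i hi => by
    linarith [jointBudget_le_budget hshort i, budget_le_of_long (mem_longChords.1 hi).2,
      saving_nonneg c, pi_gt_three]
  have hcover := two_pi_le_sum_servedWidth hlevel (fun i _ => jointBudget_nonneg c i) hbudget
    fun m => exists_access_lt_jointBudget hc (hS _ _) (le_arcDist_sub_add m hlevel)
  refine (hcover.trans (sum_le_sum_add_mul_card (wideChords_subset_longChords S) ?_)).trans
    (add_le_add_left (sum_le_mul_card_add_mul_card (flippingChords_subset c S) ?_ ?_) _)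
  · intro i hi hnarrow
    have hflips : ¬ Flips c i := fun h => hnarrow
      (mem_wideChords.2 ⟨(mem_longChords.1 hi).1, defect_lt_of_flips hshort h⟩)
    exact (servedWidth_jointBudget_le hshort hflips).trans
      (budget_le_of_long (mem_longChords.1 hi).2)
  · exact fun i hi => servedWidth_jointBudget_le_of_flips hshort (mem_flippingChords.1 hi).2
  · exact fun i hi hflips => (servedWidth_jointBudget_le hshort fun h =>
      hflips (mem_flippingChords.2 ⟨hi, h⟩)).trans (budget_le_of_wide (mem_wideChords.1 hi).2)

lemma wideChords_eq_longChords_and_sum_widthBound_le {S : Finset (ℝ × ℝ)} {c : ℝ × ℝ}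
    (hS : ∀ p q, dS S p q < τ) (hshort : chordLength c ≤ 1.4)
    (hc : ∀ i ∈ S, i ∉ longChords S → i = c) (hcard : (longChords S).card = 6) :
    wideChords S = longChords S ∧ ∑ i ∈ longChords S, widthBound c i ≤ 3.6835 := by
  have hsum := sum_widthBound_wideChords_le c S
  have hantipodal := (pi_le_sum_widthBound_wideChords hS hshort hc).trans hsum
  have hlevel := two_pi_le_card_flippingChords hS hshort hc
  rw [hcard] at hlevel
  have hfive := five_le_card_wideChords hS
  have hsix := Finset.card_le_card (wideChords_subset_longChords S)
  have hcard_wide : (wideChords S).card ≠ 5 := fun h => by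
    rw [h] at hantipodal hlevel
    push_cast at hantipodal hlevel
    rcases le_or_gt (flippingChords c S).card 3 with hN | hN
    · have : ((flippingChords c S).card : ℝ) ≤ 3 := by exact_mod_cast hN
      linarith [pi_gt_d4]
    · have : (4 : ℝ) ≤ (flippingChords c S).card := by exact_mod_cast hN
      linarith [pi_gt_d4]
  have heq := Finset.eq_of_subset_of_card_le (wideChords_subset_longChords S) (by lia)
  refine ⟨heq, ?_⟩
  rw [heq, hcard] at hsum hlevel
  have hflipping : 5 ≤ (flippingChords c S).card := by
    by_contra! hlt
    have : ((flippingChords c S).card : ℝ) ≤ 4 := by exact_mod_cast Nat.le_of_lt_succ hlt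
    push_cast at hlevel
    linarith [pi_gt_d4]
  have : (5 : ℝ) ≤ (flippingChords c S).card := by exact_mod_cast hflipping
  push_cast at hsum
  linarith

lemma arcDist_mid_lt_of_access_lt {i : ℝ × ℝ} {m : ℝ}
    (h : access i (m - τ / 2) (m + τ / 2) < τ - chordLength i) :
    arcDist m (mid i) < (τ - chordLength i) / 2 := by
  have hbudget : τ - chordLength i ≤ τ := sub_le_self _ (chordLength_nonneg i)
  rcases mid_near_of_access_lt hbudget (by linarith [pi_gt_d4]) h with ⟨hmid, -⟩ | ⟨-, hsecond⟩
  · exact hmid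
  · exact absurd hsecond (sub_chordLength_le_second_orientation i).not_gt

lemma exists_access_mid_lt {S : Finset (ℝ × ℝ)} {c : ℝ × ℝ} {q : ℝ} (hS : ∀ p q, dS S p q < τ)
    (hc : ∀ i ∈ S, i ∉ longChords S → i = c) (hq : τ ≤ arcDist (mid c) q) :
    ∃ i ∈ longChords S, access i (mid c) q < τ - chordLength i := by
  rcases exists_access_lt_or_servesWith hc (hS _ _) hq with h | h | ⟨i, hi, -, -, h | h⟩
  · exact h
  · have hspan := halfSpan_le_chordLength c
    have h₁ := arcDist_triangle q c.1 (mid c)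
    have h₂ := arcDist_triangle q c.2 (mid c)
    rw [arcDist_comm q (mid c), arcDist_comm c.1] at h₁
    rw [arcDist_comm q (mid c), arcDist_comm c.2] at h₂
    rcases min_lt_iff.1 h with h | h <;>
      linarith [arcDist_mid_fst_le c, arcDist_mid_snd_le c, arcDist_nonneg (mid c) c.1,
        arcDist_nonneg (mid c) c.2]
  · exact ⟨i, hi, h.2⟩
  · rw [arcDist_comm] at h
    linarith [chordLength_nonneg i]

lemma exists_arcDist_mid_lt {S : Finset (ℝ × ℝ)} {c : ℝ × ℝ} {m : ℝ} (hS : ∀ p q, dS S p q < τ)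
    (hshort : chordLength c ≤ 1.4) (hc : ∀ i ∈ S, i ∉ longChords S → i = c)
    (hwide : ∀ i ∈ longChords S, defect i < 0.364) (hm : τ / 2 ≤ arcDist m (mid c))
    (hm₁ : 0.592 ≤ arcDist (m - τ / 2) (mid c)) (hm₂ : 0.592 ≤ arcDist (m + τ / 2) (mid c)) :
    ∃ i ∈ longChords S, arcDist m (mid i) < widthBound c i / 2 := by
  have hlevel : τ ≤ π := by linarith [pi_gt_d4]
  rcases exists_access_lt_or_servesWith hc (hS _ _) (le_arcDist_sub_add m hlevel) with
    ⟨i, hi, h⟩ | h | ⟨i, hi, hlength, h, hmid⟩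
  · have hle := (sub_chordLength_le_jointBudget c i).trans
      (jointBudget_le_widthBound hshort (hwide i hi))
    exact ⟨i, hi, (arcDist_mid_lt_of_access_lt h).trans_le (by linarith)⟩
  · linarith [arcDist_mid_lt_of_access_lt h, chordLength_nonneg c]
  · have hjoint : jointBudget c i = τ - chordLength i + saving c := by
      rw [jointBudget, if_pos hlength]
    rw [← hjoint] at h
    have hle := jointBudget_le_widthBound hshort (hwide i hi)
    rcases mid_near_of_access_lt (by linarith [widthBound_le c i, pi_gt_three]) hlevel h with
      ⟨hnear, -⟩ | ⟨-, hsecond⟩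
    · exact ⟨i, hi, hnear.trans_le (by linarith)⟩
    · have hflips : Flips c i := by
        unfold Flips
        linarith [saving_nonneg c]
      rcases hmid with ⟨hmid, -⟩ | ⟨hmid, -⟩ <;>
        linarith [sub_chordLength_le_jointBudget c i, jointBudget_le_of_flips hshort hflips]

lemma exists_mid_near_mid_add {S : Finset (ℝ × ℝ)} {c : ℝ × ℝ} (hS : ∀ p q, dS S p q < τ)
    (hshort : chordLength c ≤ 1.4) (hc : ∀ i ∈ S, i ∉ longChords S → i = c)
    (hwide : ∀ i ∈ longChords S, defect i < 0.364) :
    (∃ i ∈ longChords S, arcDist (mid c + τ / 2) (mid i) < widthBound c i / 2) ∧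
      ∃ i ∈ longChords S, arcDist (mid c - τ / 2) (mid i) < widthBound c i / 2 := by
  have hbound : ∀ i ∈ longChords S, τ - chordLength i ≤ widthBound c i := fun i hi =>
    (sub_chordLength_le_jointBudget c i).trans (jointBudget_le_widthBound hshort (hwide i hi))
  have hlevel : τ ≤ π := by linarith [pi_gt_d4]
  constructor
  · have hmid : mid c = mid c + τ / 2 - τ / 2 := (add_sub_cancel_right _ _).symm
    have hq := le_arcDist_sub_add (mid c + τ / 2) hlevel
    rw [← hmid] at hq
    obtain ⟨i, hi, h⟩ := exists_access_mid_lt hS hc hq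
    rw [congrArg (access i · _) hmid] at h
    exact ⟨i, hi, (arcDist_mid_lt_of_access_lt h).trans_le (by linarith [hbound i hi])⟩
  · have hmid : mid c = mid c - τ / 2 + τ / 2 := (sub_add_cancel _ _).symm
    have hq := le_arcDist_sub_add (mid c - τ / 2) hlevel
    rw [← hmid, arcDist_comm] at hq
    obtain ⟨i, hi, h⟩ := exists_access_mid_lt hS hc hq
    rw [access_comm, congrArg (access i _) hmid] at h
    exact ⟨i, hi, (arcDist_mid_lt_of_access_lt h).trans_le (by linarith [hbound i hi])⟩

lemma lt_arcDist_of_lt_arcDist_add {m μ t a b : ℝ} (ha : 0 < a) (hb : 0 < b) (hat : a ≤ t)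
    (hbt : b ≤ t) (hm : (t + a + b) / 2 < arcDist m (μ + (a - b) / 2)) :
    a < arcDist m (μ + t / 2) ∧ b < arcDist m (μ - t / 2) ∧ t / 2 < arcDist m μ := by
  have hvia : ∀ x, (t + a + b) / 2 < arcDist m (μ + x) + |x - (a - b) / 2| := fun x => by
    have h := arcDist_le_abs (μ + x) (μ + (a - b) / 2)
    rw [add_sub_add_left_eq_sub] at h
    linarith [arcDist_triangle m (μ + x) (μ + (a - b) / 2)]
  refine ⟨?_, ?_, ?_⟩
  · have h := hvia (t / 2)
    rw [abs_of_nonneg (by linarith)] at h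
    linarith
  · have h := hvia (-(t / 2))
    rw [abs_of_nonpos (by linarith), ← sub_eq_add_neg μ] at h
    linarith
  · have h := hvia 0
    rw [add_zero] at h
    rcases abs_cases (0 - (a - b) / 2) with ⟨habs, -⟩ | ⟨habs, -⟩ <;> linarith

/-- The midpoints of the arcs served with the help of `c` lie at most `0.592` outside the arc of
length `π / 2 + 1` around `mid c`. The two chords serving the arcs that end or start at `mid c` pay
for extending that arc so as to contain all these midpoints, together with those served by the two
chords themselves. -/
lemma two_pi_le_add_sum_widthBound {S : Finset (ℝ × ℝ)} {c : ℝ × ℝ} (hS : ∀ p q, dS S p q < τ)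
    (hshort : chordLength c ≤ 1.4) (hc : ∀ i ∈ S, i ∉ longChords S → i = c)
    (hwide : ∀ i ∈ longChords S, defect i < 0.364) :
    2 * π ≤ τ + ∑ i ∈ longChords S, widthBound c i := by
  classical
  obtain ⟨⟨i, hi, hmi⟩, j, hj, hmj⟩ := exists_mid_near_mid_add hS hshort hc hwide
  have hi_bounds := And.intro (widthBound_ge c i) (widthBound_le c i)
  have hj_bounds := And.intro (widthBound_ge c j) (widthBound_le c j)
  have hij : j ≠ i := by
    rintro rfl
    have hsep := le_arcDist_sub_add (mid c) (by linarith [pi_gt_d4] : τ ≤ π)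
    have htri := arcDist_triangle (mid c - τ / 2) (mid j) (mid c + τ / 2)
    rw [arcDist_comm (mid j)] at htri
    linarith [pi_gt_three]
  have hj_erase := Finset.mem_erase.2 ⟨hij, hj⟩
  rw [← Finset.add_sum_erase _ _ hi, ← Finset.add_sum_erase _ _ hj_erase, ← add_assoc, ← add_assoc]
  refine two_pi_le_add_sum_of_arcs_cover (c := mid)
    (c₀ := mid c + (widthBound c i - widthBound c j) / 2) (by linarith [pi_pos])
    (fun k _ => by linarith [widthBound_ge c k]) fun m hm => ?_
  obtain ⟨hm_add, hm_sub, hm_mid⟩ := lt_arcDist_of_lt_arcDist_add (by linarith) (by linarith)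
    (by linarith [pi_pos]) (by linarith [pi_pos]) hm
  obtain ⟨k, hk, hmk⟩ := exists_arcDist_mid_lt hS hshort hc hwide hm_mid.le
    (by rw [arcDist_sub_left]; linarith) (by rw [arcDist_add_left]; linarith)
  have hki : k ≠ i := by
    rintro rfl
    linarith [arcDist_triangle m (mid k) (mid c + τ / 2), arcDist_comm (mid k) (mid c + τ / 2)]
  have hkj : k ≠ j := by
    rintro rfl
    linarith [arcDist_triangle m (mid k) (mid c - τ / 2), arcDist_comm (mid k) (mid c - τ / 2)]
  exact ⟨k, Finset.mem_erase.2 ⟨hkj, Finset.mem_erase.2 ⟨hki, hk⟩⟩, hmk.le⟩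

lemma not_forall_dS_lt {S : Finset (ℝ × ℝ)} (hcard : S.card = 7) : ¬ ∀ p q, dS S p q < τ := by
  intro hS
  have hsix := le_antisymm (card_longChords_le hS hcard) (six_le_card_longChords hS)
  have hsub : longChords S ⊆ S := Finset.filter_subset _ S
  obtain ⟨c, hc⟩ : ∃ c, S \ longChords S = {c} := by
    rw [← Finset.card_eq_one, Finset.card_sdiff_of_subset hsub, hcard, hsix]
  obtain ⟨hcS, hc_short⟩ := Finset.mem_sdiff.1 (hc ▸ Finset.mem_singleton_self c)
  have hshort : chordLength c ≤ 1.4 :=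
    le_of_not_ge fun h => hc_short (mem_longChords.2 ⟨hcS, h⟩)
  have honly : ∀ i ∈ S, i ∉ longChords S → i = c := fun i hi hi' =>
    Finset.mem_singleton.1 (hc ▸ Finset.mem_sdiff.2 ⟨hi, hi'⟩)
  obtain ⟨hwide, hsum⟩ := wideChords_eq_longChords_and_sum_widthBound_le hS hshort honly hsix
  have hcover := two_pi_le_add_sum_widthBound hS hshort honly fun i hi =>
    (mem_wideChords.1 (hwide ▸ hi)).2
  linarith [pi_gt_d4]

/-! ### Upper bounds for the diameter -/

lemma dS_le_walkCost {S : Finset (ℝ × ℝ)} {L : List (ℝ × ℝ)} (p q : ℝ)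
    (hL : ∀ e ∈ L, e ∈ S ∨ e.swap ∈ S) : dS S p q ≤ walkCost q p L :=
  csInf_le (bddBelow_walkCosts S p q) ⟨L, hL, rfl⟩

lemma dS_le_arcDist (S : Finset (ℝ × ℝ)) (p q : ℝ) : dS S p q ≤ arcDist p q :=
  dS_le_walkCost p q (L := []) (by simp)

lemma dS_le_chordLength_add_access {S : Finset (ℝ × ℝ)} {e : ℝ × ℝ} (he : e ∈ S) (p q : ℝ) :
    dS S p q ≤ chordLength e + access e p q := by
  have h₁ := dS_le_walkCost p q (S := S) (L := [e]) (by simp [he])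
  have h₂ := dS_le_walkCost p q (S := S) (L := [e.swap]) (by simp [he])
  rw [walkCost_cons, walkCost_nil] at h₁ h₂
  rw [chordLength_swap, Prod.fst_swap, Prod.snd_swap] at h₂
  rw [access, ← min_add_add_left, arcDist_comm q, arcDist_comm q]
  exact le_min (by linarith) (by linarith)

lemma dS_le_diamS (S : Finset (ℝ × ℝ)) (p q : ℝ) : dS S p q ≤ diamS S := by
  refine le_csSup ⟨π, ?_⟩ ⟨p, q, rfl⟩
  rintro _ ⟨p, q, rfl⟩
  exact (dS_le_arcDist S p q).trans (arcDist_le_pi p q)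

lemma diamS_nonneg (S : Finset (ℝ × ℝ)) : 0 ≤ diamS S := by
  refine (Real.sInf_nonneg ?_).trans (dS_le_diamS S 0 0)
  rintro _ ⟨L, -, rfl⟩
  exact walkCost_nonneg _ _ L

lemma exists_mem_Ico_eq_sub_add (a p q : ℝ) : ∃ m ∈ Set.Ico a (a + 2 * π),
    ((p : AddCircle (2 * π)) = (m - arcDist p q / 2 : ℝ) ∧
        (q : AddCircle (2 * π)) = (m + arcDist p q / 2 : ℝ)) ∨
      ((p : AddCircle (2 * π)) = (m + arcDist p q / 2 : ℝ) ∧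
        (q : AddCircle (2 * π)) = (m - arcDist p q / 2 : ℝ)) := by
  obtain ⟨μ, hμ⟩ := exists_endpoints_eq_chordAt (p, q)
  refine ⟨toIcoMod two_pi_pos a μ, toIcoMod_mem_Ico _ _ _, ?_⟩
  have hmod : ((toIcoMod two_pi_pos a μ : ℝ) : AddCircle (2 * π)) = μ := by
    rw [toIcoMod, AddCircle.coe_sub, sub_eq_self, AddCircle.coe_eq_zero_iff]
    exact ⟨_, rfl⟩
  rwa [AddCircle.coe_sub, AddCircle.coe_add, hmod, ← AddCircle.coe_sub, ← AddCircle.coe_add]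

lemma diamS_le_of_access {S : Finset (ℝ × ℝ)} {t : ℝ} (a : ℝ)
    (h : ∀ m ∈ Set.Ico a (a + 2 * π), ∀ ξ ∈ Set.Icc t π,
      ∃ e ∈ S, chordLength e + access e (m - ξ / 2) (m + ξ / 2) ≤ t) : diamS S ≤ t := by
  refine csSup_le ⟨_, 0, 0, rfl⟩ ?_
  rintro _ ⟨p, q, rfl⟩
  rcases le_total (arcDist p q) t with ht | ht
  · exact (dS_le_arcDist S p q).trans ht
  · obtain ⟨m, hm, hpq⟩ := exists_mem_Ico_eq_sub_add a p q
    obtain ⟨e, he, haccess⟩ := h m hm _ ⟨ht, arcDist_le_pi p q⟩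
    refine (dS_le_chordLength_add_access he p q).trans ?_
    rcases hpq with ⟨hp, hq⟩ | ⟨hp, hq⟩
    · rwa [access_congr rfl rfl hp hq]
    · rwa [access_comm, access_congr rfl rfl hq hp]

lemma access_chordAt_le {μ φ m x r : ℝ} (hm : arcDist m μ ≤ r) (hx : |x - φ| ≤ r) :
    access (chordAt μ φ) (m - x) (m + x) ≤ 2 * r := by
  obtain ⟨n, hn⟩ := exists_arcDist_eq_abs m μ
  rw [hn] at hm
  refine (min_le_left _ _).trans ?_
  have h₁ := arcDist_le_abs_add (m - x) (μ - φ) n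
  have h₂ := arcDist_le_abs_add (m + x) (μ + φ) n
  have hsum : |m - μ + 2 * π * n - (x - φ)| + |m - μ + 2 * π * n + (x - φ)| ≤ 2 * r := by
    obtain ⟨hm₁, hm₂⟩ := abs_le.1 hm
    obtain ⟨hx₁, hx₂⟩ := abs_le.1 hx
    rcases abs_cases (m - μ + 2 * π * n - (x - φ)) with ⟨h, -⟩ | ⟨h, -⟩ <;>
      rcases abs_cases (m - μ + 2 * π * n + (x - φ)) with ⟨h', -⟩ | ⟨h', -⟩ <;> linarith
  have h₁' : m - x - (μ - φ) + 2 * π * n = m - μ + 2 * π * n - (x - φ) := by ring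
  have h₂' : m + x - (μ + φ) + 2 * π * n = m - μ + 2 * π * n + (x - φ) := by ring
  rw [h₁'] at h₁
  rw [h₂'] at h₂
  exact (add_le_add h₁ h₂).trans hsum

lemma access_chordAt_le_of_add_pi {μ φ m x r : ℝ} (hm : arcDist m (μ + π) ≤ r)
    (hx : |x - (π - φ)| ≤ r) : access (chordAt μ φ) (m - x) (m + x) ≤ 2 * r := by
  rw [← access_chordAt_add_pi]
  exact access_chordAt_le hm hx

lemma arcDist_chordAt {φ : ℝ} (μ : ℝ) (h₀ : 0 ≤ φ) (h : φ ≤ π / 2) :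
    arcDist (chordAt μ φ).1 (chordAt μ φ).2 = 2 * φ := by
  rw [chordAt, arcDist_comm]
  refine le_antisymm ((arcDist_le_abs _ _).trans_eq ?_) (le_arcDist (by linarith) (by linarith))
  rw [abs_of_nonneg (by linarith)]
  ring

lemma chordLength_chordAt {φ : ℝ} (μ : ℝ) (h₀ : 0 ≤ φ) (h : φ ≤ π / 2) :
    chordLength (chordAt μ φ) = 2 * sin φ := by
  rw [chordLength, chordLen, arcDist_chordAt μ h₀ h, mul_div_cancel_left₀ φ two_ne_zero]

lemma isShortcut_chordAt {φ : ℝ} (μ : ℝ) (h₀ : 0 < φ) (h : φ ≤ π / 2) :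
    IsShortcut (chordAt μ φ) := by
  rw [IsShortcut, arcDist_chordAt μ h₀.le h]
  positivity

lemma chordAt_inj {μ μ' φ φ' : ℝ} : chordAt μ φ = chordAt μ' φ' ↔ μ = μ' ∧ φ = φ' := by
  refine ⟨fun h => ?_, fun ⟨hμ, hφ⟩ => by rw [hμ, hφ]⟩
  obtain ⟨h₁, h₂⟩ := Prod.ext_iff.1 h
  simp only [chordAt] at h₁ h₂
  constructor <;> linarith

lemma exists_abs_sub_mul_le {m d : ℝ} {n : ℕ} (hd : 0 < d) (h₁ : -(d / 2) ≤ m)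
    (h₂ : m < d * n - d / 2) : ∃ k < n, |m - d * k| ≤ d / 2 := by
  have hx : 0 ≤ (m + d / 2) / d := div_nonneg (by linarith) hd.le
  have hle := (le_div_iff₀ hd).1 (Nat.floor_le hx)
  have hlt := (div_lt_iff₀ hd).1 (Nat.lt_floor_add_one ((m + d / 2) / d))
  refine ⟨⌊(m + d / 2) / d⌋₊, ?_, abs_le.2 ⟨by linarith, by linarith⟩⟩
  rw [Nat.floor_lt hx, div_lt_iff₀ hd]
  linarith

/-! ### Evenly spaced diameters -/

/-- `k` chords of half span `φ` whose midpoints are spaced by `d`. -/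
noncomputable def fan (k : ℕ) (d φ : ℝ) : Finset (ℝ × ℝ) :=
  (Finset.range k).image fun j : ℕ => chordAt (d * j) φ

lemma mem_fan {k : ℕ} {d φ : ℝ} {e : ℝ × ℝ} :
    e ∈ fan k d φ ↔ ∃ j < k, chordAt (d * j) φ = e := by
  simp only [fan, Finset.mem_image, Finset.mem_range]

lemma card_fan (k : ℕ) {d : ℝ} (hd : d ≠ 0) (φ : ℝ) : (fan k d φ).card = k := by
  rw [fan, Finset.card_image_of_injective, Finset.card_range]
  intro i j h
  exact_mod_cast mul_left_cancel₀ hd (chordAt_inj.1 h).1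

lemma isShortcut_of_mem_fan {k : ℕ} {d φ : ℝ} {e : ℝ × ℝ} (h₀ : 0 < φ) (h : φ ≤ π / 2)
    (he : e ∈ fan k d φ) : IsShortcut e := by
  obtain ⟨j, -, rfl⟩ := mem_fan.1 he
  exact isShortcut_chordAt _ h₀ h

lemma exists_mem_fan_access_le {k : ℕ} {d φ m x r : ℝ} (hd : 0 < d) (hr : d / 2 ≤ r)
    (h₁ : -(d / 2) ≤ m) (h₂ : m < d * k - d / 2) (hx : |x - φ| ≤ r) :
    ∃ e ∈ fan k d φ, chordLength e + access e (m - x) (m + x) ≤ 2 + 2 * r := by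
  obtain ⟨j, hj, hm⟩ := exists_abs_sub_mul_le hd h₁ h₂
  refine ⟨_, mem_fan.2 ⟨j, hj, rfl⟩, add_le_add (chordLength_le_two _) ?_⟩
  exact access_chordAt_le ((arcDist_le_abs _ _).trans (hm.trans hr)) hx

lemma exists_mem_fan_access_le_of_add_pi {k : ℕ} {d φ m x r : ℝ} (hd : 0 < d) (hr : d / 2 ≤ r)
    (h₁ : π - d / 2 ≤ m) (h₂ : m < π + d * k - d / 2) (hx : |x - (π - φ)| ≤ r) :
    ∃ e ∈ fan k d φ, chordLength e + access e (m - x) (m + x) ≤ 2 + 2 * r := by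
  obtain ⟨j, hj, hm⟩ := exists_abs_sub_mul_le (n := k) hd (m := m - π) (by linarith) (by linarith)
  rw [sub_right_comm, sub_sub] at hm
  refine ⟨_, mem_fan.2 ⟨j, hj, rfl⟩, add_le_add (chordLength_le_two _) ?_⟩
  exact access_chordAt_le_of_add_pi ((arcDist_le_abs _ _).trans (hm.trans hr)) hx

lemma diamS_fan_diameters_le {k : ℕ} (hk : 6 ≤ k) : diamS (fan k (π / k) (π / 2)) ≤ τ := by
  have hk₀ : (6 : ℝ) ≤ k := by exact_mod_cast hk
  have hd : 0 < π / k := div_pos pi_pos (by linarith)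
  have hr : π / k / 2 ≤ (π / 2 - 1) / 2 := by
    have : π / k ≤ π / 6 := div_le_div_of_nonneg_left pi_pos.le (by norm_num) hk₀
    linarith [pi_gt_three]
  have hdk : π / k * k = π := div_mul_cancel₀ π (by linarith)
  refine diamS_le_of_access (-(π / k / 2)) fun m hm ξ hξ => ?_
  have hx : |ξ / 2 - π / 2| ≤ (π / 2 - 1) / 2 := abs_le.2 ⟨by linarith [hξ.1], by
    linarith [hξ.2, pi_gt_three]⟩
  have ht : 2 + 2 * ((π / 2 - 1) / 2) = τ := by ring
  rw [← ht]
  rcases lt_or_ge m (π - π / k / 2) with hm' | hm'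
  · exact exists_mem_fan_access_le hd hr hm.1 (by rwa [hdk]) hx
  · refine exists_mem_fan_access_le_of_add_pi hd hr hm' (by rw [hdk]; linarith [hm.2]) ?_
    rwa [sub_half]

/-! ### Eight chords -/

/-- Six near-diameters, which in their first orientation serve the arcs with midpoint in
`[-0.279, 3.069]`, and in their second orientation the sufficiently long arcs with midpoint in the
rest of the circle; two short chords serve the shorter arcs there. The numbers come from balancing
these three requirements. -/
noncomputable def eightChords : Finset (ℝ × ℝ) :=
  fan 6 0.558 (π / 2 - 0.0115) ∪ {chordAt 3.803 0.56, chordAt 5.271 0.56}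

lemma eightChords_cases {e : ℝ × ℝ} : e ∈ eightChords ↔
    e ∈ fan 6 0.558 (π / 2 - 0.0115) ∨ e = chordAt 3.803 0.56 ∨ e = chordAt 5.271 0.56 := by
  simp only [eightChords, Finset.mem_union, Finset.mem_insert, Finset.mem_singleton]

lemma card_eightChords : eightChords.card = 8 := by
  rw [eightChords, Finset.card_union_of_disjoint, card_fan 6 (by norm_num), Finset.card_pair]
  · rw [Ne, chordAt_inj]
    norm_num
  · refine Finset.disjoint_left.2 fun e he => ?_
    obtain ⟨j, -, rfl⟩ := mem_fan.1 he
    simp only [Finset.mem_insert, Finset.mem_singleton, chordAt_inj, not_or, not_and]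
    constructor <;> intro <;> linarith [pi_gt_three]

lemma isShortcut_of_mem_eightChords {e : ℝ × ℝ} (he : e ∈ eightChords) : IsShortcut e := by
  rcases eightChords_cases.1 he with he | rfl | rfl
  · exact isShortcut_of_mem_fan (by linarith [pi_gt_three]) (by linarith) he
  · exact isShortcut_chordAt _ (by norm_num) (by linarith [pi_gt_three])
  · exact isShortcut_chordAt _ (by norm_num) (by linarith [pi_gt_three])

lemma chordLength_add_access_short_le {μ m ξ : ℝ} (hm : |m - μ| ≤ 0.748)
    (hξ₁ : π - 0.5822 ≤ ξ) (hξ₂ : ξ < π - 0.5363) :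
    chordLength (chordAt μ 0.56) + access (chordAt μ 0.56) (m - ξ / 2) (m + ξ / 2)
      ≤ π - 0.5822 := by
  have hsin : sin 0.56 ≤ 0.5313 := by
    have := (abs_le.1 (sin_bound (x := 0.56) (by norm_num [abs_of_pos]))).2
    norm_num [abs_of_pos] at this
    linarith
  have hx : |ξ / 2 - 0.56| ≤ 0.748 :=
    abs_le.2 ⟨by linarith [pi_gt_three], by linarith [pi_lt_d4]⟩
  have haccess := access_chordAt_le ((arcDist_le_abs m μ).trans hm) hx
  rw [chordLength_chordAt μ (by norm_num) (by linarith [pi_gt_three])]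
  linarith [hsin, pi_gt_d4]

lemma diamS_eightChords_le : diamS eightChords ≤ π - 0.5822 := by
  have hπ := pi_gt_d4
  have hπ' := pi_lt_d4
  refine diamS_le_of_access (-0.279) fun m ⟨hm₁, hm₂⟩ ξ ⟨hξ₁, hξ₂⟩ => ?_
  rcases lt_or_ge m 3.069 with hm | hm
  · obtain ⟨e, he, haccess⟩ := exists_mem_fan_access_le (k := 6) (d := 0.558) (m := m) (x := ξ / 2)
      (φ := π / 2 - 0.0115) (r := 0.27965) (by norm_num) (by norm_num) (by linarith)
      (by norm_num; linarith) (abs_le.2 ⟨by linarith, by linarith⟩)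
    exact ⟨e, eightChords_cases.2 (.inl he), by linarith⟩
  · rcases le_or_gt (π - 0.5363) ξ with hξ | hξ
    · obtain ⟨e, he, haccess⟩ := exists_mem_fan_access_le_of_add_pi (k := 6) (d := 0.558) (m := m)
        (x := ξ / 2) (φ := π / 2 - 0.0115) (r := 0.27965) (by norm_num) (by norm_num) (by linarith)
        (by norm_num; linarith) (abs_le.2 ⟨by linarith, by linarith⟩)
      exact ⟨e, eightChords_cases.2 (.inl he), by linarith⟩
    · rcases le_or_gt m 4.537 with hm' | hm'
      · exact ⟨_, eightChords_cases.2 (.inr (.inl rfl)), chordLength_add_access_short_le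
          (abs_le.2 ⟨by linarith, by linarith⟩) hξ₁ hξ⟩
      · exact ⟨_, eightChords_cases.2 (.inr (.inr rfl)), chordLength_add_access_short_le
          (abs_le.2 ⟨by linarith, by linarith⟩) hξ₁ hξ⟩

/-! ### The optimal diameters -/

lemma diamK_le {S : Finset (ℝ × ℝ)} (hS : ∀ s ∈ S, IsShortcut s) : diamK S.card ≤ diamS S := by
  refine csInf_le ⟨0, ?_⟩ ⟨S, rfl, hS, rfl⟩
  rintro _ ⟨T, -, -, rfl⟩
  exact diamS_nonneg T

lemma le_diamS_of_card_eq_seven {S : Finset (ℝ × ℝ)} (hcard : S.card = 7) : τ ≤ diamS S := by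
  by_contra! hlt
  exact not_forall_dS_lt hcard fun p q => (dS_le_diamS S p q).trans_lt hlt

lemma diamK_seven : diamK 7 = τ := by
  have hcard := card_fan 7 (div_pos pi_pos (Nat.cast_pos.2 (by norm_num : 0 < 7))).ne' (π / 2)
  have hshort : ∀ s ∈ fan 7 (π / (7 : ℕ)) (π / 2), IsShortcut s := fun s hs =>
    isShortcut_of_mem_fan (by positivity) le_rfl hs
  refine le_antisymm ?_ (le_csInf ⟨_, _, hcard, hshort, rfl⟩ ?_)
  · exact (congrArg diamK hcard).symm.trans_le
      ((diamK_le hshort).trans (diamS_fan_diameters_le (by norm_num)))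
  · rintro _ ⟨S, hS, -, rfl⟩
    exact le_diamS_of_card_eq_seven hS

/-- eight shortcuts improve on seven: some set of eight shortcuts has
diameter at most `π - 0.5822 < π/2 + 1`; hence `diam(8) < diam(7) = π/2 + 1`. -/
theorem stmt5 :
    (∃ S : Finset (ℝ × ℝ), S.card = 8 ∧ (∀ s ∈ S, IsShortcut s) ∧
      diamS S ≤ π - 0.5822) ∧
    π - 0.5822 < π / 2 + 1 ∧
    diamK 8 < diamK 7 ∧ diamK 7 = π / 2 + 1 := by
  have hlt : π - 0.5822 < π / 2 + 1 := by linarith [pi_lt_d4]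
  refine ⟨⟨eightChords, card_eightChords, fun _ => isShortcut_of_mem_eightChords,
    diamS_eightChords_le⟩, hlt, ?_, diamK_seven⟩
  calc diamK 8 = diamK eightChords.card := by rw [card_eightChords]
    _ ≤ diamS eightChords := diamK_le fun _ => isShortcut_of_mem_eightChords
    _ ≤ π - 0.5822 := diamS_eightChords_le
    _ < π / 2 + 1 := hlt
    _ = diamK 7 := diamK_seven.symm
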